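/- arXiv:2302.02426 — 9 statements merged into one kernel-verified Lean document; each statement's English description precedes it below -/
import Mathlib

section
/- Let (Ω, F, P) be a probability space with a filtration (H_t)_{t∈ℕ} and let (Z_t)_{t∈ℕ} be a real-valued process adapted to (H_t) with Z_0 = 0. Let t₀ be a positive integer and let θ ≥ 0 and 0 < ν ≤ ν_max be constants such that: (i) for every t, almost surely on the event {Z_t ≥ θ}, E[Z_{t+t₀} − Z_t | H_t] ≤ −ν t₀; and (ii) |Z_{t+1} − Z_t| ≤ ν_max almost surely for every t. Then for every t, E[Z_t] ≤ θ + t₀ ν_max + t₀ (4ν_max²/ν) log(8ν_max²/ν²). -/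
open MeasureTheory

/-
For small `r > 0` the exponential moment `E exp (r Z_t)` contracts along blocks of length `t₀`. With
`B = t₀ ν_max` and `r B ≤ 1`, the inequality `exp x ≤ 1 + x + x²` on `[-1, 1]` and the conditional
drift give `E exp (r Z_{t + t₀}) ≤ (1 - δ) E exp (r Z_t) + exp (r (θ + B))`, where
`δ = r ν t₀ - (r B)²`. Hence `E exp (r Z_t) ≤ exp (r (θ + B)) / δ` for all `t`, and Jensen's
inequality turns this into `E Z_t ≤ θ + B - log δ / r`. The choice `r = ν / (4 t₀ ν_max²)` gives
`δ = 3 ν² / (16 ν_max²)`.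
-/

open ProbabilityTheory

lemma exp_le_one_add_sq_add {x b : ℝ} (hx : |x| ≤ b) (hb : b ≤ 1) :
    Real.exp x ≤ 1 + b ^ 2 + x := by
  have hexp : Real.exp x - 1 - x ≤ x ^ 2 :=
    le_of_abs_le (Real.abs_exp_sub_one_sub_id_le (hx.trans hb))
  have hsq : x ^ 2 ≤ b ^ 2 := sq_le_sq.2 (hx.trans (le_abs_self b))
  linarith

lemma exp_mul_le_of_abs_sub_le {x y r B : ℝ} (hr : 0 ≤ r) (hrB : r * B ≤ 1) (hxy : |y - x| ≤ B) :
    Real.exp (r * y) ≤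
      (1 + (r * B) ^ 2) * Real.exp (r * x) + r * (Real.exp (r * x) * (y - x)) := by
  have hsmall : |r * (y - x)| ≤ r * B := by
    rw [abs_mul, abs_of_nonneg hr]
    gcongr
  calc Real.exp (r * y) = Real.exp (r * x) * Real.exp (r * (y - x)) := by
        rw [← Real.exp_add]
        ring_nf
    _ ≤ Real.exp (r * x) * (1 + (r * B) ^ 2 + r * (y - x)) := by
      gcongr
      exact exp_le_one_add_sq_add hsmall hrB
    _ = (1 + (r * B) ^ 2) * Real.exp (r * x) + r * (Real.exp (r * x) * (y - x)) := by ring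

lemma le_div_of_block_contraction {u : ℕ → ℝ} {K δ : ℝ} {n : ℕ} (hn : 0 < n) (hK : 0 ≤ K)
    (hδ : 0 < δ) (hδ1 : δ ≤ 1) (hstart : ∀ t < n, u t ≤ K)
    (hstep : ∀ t, u (t + n) ≤ (1 - δ) * u t + K) (t : ℕ) : u t ≤ K / δ := by
  induction t using Nat.strong_induction_on with
  | _ t ih =>
    rcases lt_or_ge t n with htn | hnt
    · exact (hstart t htn).trans (le_div_self hK hδ hδ1)
    · obtain ⟨s, rfl⟩ := Nat.exists_eq_add_of_le' hnt
      calc u (s + n) ≤ (1 - δ) * u s + K := hstep s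
        _ ≤ (1 - δ) * (K / δ) + K := by
          gcongr
          exact ih s (by lia)
        _ = K / δ := by field_simp; ring

section CondExp

variable {Ω : Type*} {m mΩ : MeasurableSpace Ω} {μ : Measure Ω}

lemma setIntegral_mul_le_of_condExp_le (hm : m ≤ mΩ) [SigmaFinite (μ.trim hm)]
    {g D : Ω → ℝ} {s : Set Ω} {c : ℝ} (hs : MeasurableSet[m] s) (hg : StronglyMeasurable[m] g)
    (hg_nonneg : 0 ≤ g) (hg_int : Integrable g μ) (hD_int : Integrable D μ)
    (hgD_int : Integrable (g * D) μ) (hD : ∀ᵐ ω ∂μ, ω ∈ s → (μ[D | m]) ω ≤ c) :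
    ∫ ω in s, g ω * D ω ∂μ ≤ c * ∫ ω in s, g ω ∂μ := by
  calc ∫ ω in s, g ω * D ω ∂μ = ∫ ω in s, (μ[g * D | m]) ω ∂μ :=
        (setIntegral_condExp hm hgD_int hs).symm
    _ ≤ ∫ ω in s, c * g ω ∂μ := by
      refine setIntegral_mono_on_ae integrable_condExp.integrableOn
        (hg_int.const_mul c).integrableOn (hm s hs) ?_
      filter_upwards [condExp_mul_of_stronglyMeasurable_left hg hgD_int hD_int, hD]
        with ω hpull hDω hω
      rw [hpull, Pi.mul_apply, mul_comm c]
      exact mul_le_mul_of_nonneg_left (hDω hω) (hg_nonneg ω)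
    _ = c * ∫ ω in s, g ω ∂μ := integral_const_mul c _

lemma setIntegral_exp_mul_le_of_condExp_sub_le [IsFiniteMeasure μ] (hm : m ≤ mΩ)
    {X Y : Ω → ℝ} {s : Set Ω} {r a B : ℝ} (hs : MeasurableSet[m] s) (hX : Measurable[m] X)
    (hY : AEMeasurable Y μ) (hr : 0 ≤ r) (hrB : r * B ≤ 1)
    (hX_int : Integrable (fun ω ↦ Real.exp (r * X ω)) μ)
    (hXY : ∀ᵐ ω ∂μ, |Y ω - X ω| ≤ B)
    (hdrift : ∀ᵐ ω ∂μ, ω ∈ s → (μ[Y - X | m]) ω ≤ -a) :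
    ∫ ω in s, Real.exp (r * Y ω) ∂μ ≤
      (1 - (r * a - (r * B) ^ 2)) * ∫ ω in s, Real.exp (r * X ω) ∂μ := by
  set g : Ω → ℝ := fun ω ↦ Real.exp (r * X ω)
  have hD_meas : AEStronglyMeasurable (Y - X) μ :=
    (hY.sub (hX.mono hm le_rfl).aemeasurable).aestronglyMeasurable
  have hD_int : Integrable (Y - X) μ := .of_bound hD_meas B hXY
  have hgD_int : Integrable (g * (Y - X)) μ := hX_int.mul_bdd hD_meas hXY
  have hexp : ∀ᵐ ω ∂μ, Real.exp (r * Y ω) ≤ (1 + (r * B) ^ 2) * g ω + r * (g * (Y - X)) ω :=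
    hXY.mono fun ω hω ↦ exp_mul_le_of_abs_sub_le hr hrB hω
  have hdrift_int : ∫ ω in s, (g * (Y - X)) ω ∂μ ≤ -a * ∫ ω in s, g ω ∂μ :=
    setIntegral_mul_le_of_condExp_le hm hs
      (Real.measurable_exp.comp (hX.const_mul r)).stronglyMeasurable
      (fun _ ↦ (Real.exp_pos _).le) hX_int hD_int hgD_int hdrift
  have hg_lin : Integrable (fun ω ↦ (1 + (r * B) ^ 2) * g ω) (μ.restrict s) :=
    (hX_int.const_mul _).integrableOn
  have hgD_lin : Integrable (fun ω ↦ r * (g * (Y - X)) ω) (μ.restrict s) :=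
    (hgD_int.const_mul r).integrableOn
  calc ∫ ω in s, Real.exp (r * Y ω) ∂μ
      ≤ ∫ ω in s, ((1 + (r * B) ^ 2) * g ω + r * (g * (Y - X)) ω) ∂μ :=
        integral_mono_of_nonneg (.of_forall fun _ ↦ (Real.exp_pos _).le)
          (hg_lin.add hgD_lin) (ae_restrict_of_ae hexp)
    _ = (1 + (r * B) ^ 2) * ∫ ω in s, g ω ∂μ + r * ∫ ω in s, (g * (Y - X)) ω ∂μ := by
      rw [integral_add hg_lin hgD_lin, integral_const_mul, integral_const_mul]
    _ ≤ (1 + (r * B) ^ 2) * ∫ ω in s, g ω ∂μ + r * (-a * ∫ ω in s, g ω ∂μ) := by gcongr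
    _ = (1 - (r * a - (r * B) ^ 2)) * ∫ ω in s, g ω ∂μ := by ring

end CondExp

section Moments

variable {Ω : Type*} {mΩ : MeasurableSpace Ω} {μ : Measure Ω} [IsProbabilityMeasure μ]

lemma mgf_le_of_condExp_sub_le {m : MeasurableSpace Ω} (hm : m ≤ mΩ) {X Y : Ω → ℝ}
    {r a B θ : ℝ} (hX : Measurable[m] X) (hY : AEMeasurable Y μ) (hr : 0 ≤ r) (hra : r * a ≤ 1)
    (hrB : r * B ≤ 1) (hX_int : Integrable (fun ω ↦ Real.exp (r * X ω)) μ)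
    (hY_int : Integrable (fun ω ↦ Real.exp (r * Y ω)) μ)
    (hXY : ∀ᵐ ω ∂μ, |Y ω - X ω| ≤ B)
    (hdrift : ∀ᵐ ω ∂μ, θ ≤ X ω → (μ[Y - X | m]) ω ≤ -a) :
    mgf Y μ r ≤ (1 - (r * a - (r * B) ^ 2)) * mgf X μ r + Real.exp (r * (θ + B)) := by
  set A : Set Ω := {ω | θ ≤ X ω}
  have hA : MeasurableSet[m] A := measurableSet_le measurable_const hX
  have hfactor : 0 ≤ 1 - (r * a - (r * B) ^ 2) := by linarith [sq_nonneg (r * B)]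
  have hdrift_part : ∫ ω in A, Real.exp (r * Y ω) ∂μ ≤
      (1 - (r * a - (r * B) ^ 2)) * mgf X μ r :=
    (setIntegral_exp_mul_le_of_condExp_sub_le hm hA hX hY hr hrB hX_int hXY hdrift).trans
      (mul_le_mul_of_nonneg_left
        (setIntegral_le_integral hX_int (.of_forall fun _ ↦ (Real.exp_pos _).le)) hfactor)
  have hlow_part : ∫ ω in Aᶜ, Real.exp (r * Y ω) ∂μ ≤ Real.exp (r * (θ + B)) := by
    calc ∫ ω in Aᶜ, Real.exp (r * Y ω) ∂μ ≤ ∫ _ in Aᶜ, Real.exp (r * (θ + B)) ∂μ := by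
          refine setIntegral_mono_on_ae hY_int.integrableOn (integrable_const _).integrableOn
            (hm A hA).compl ?_
          filter_upwards [hXY] with ω hω hωA
          have hXθ : X ω < θ := not_le.1 hωA
          gcongr
          linarith [le_of_abs_le hω]
      _ ≤ ∫ _, Real.exp (r * (θ + B)) ∂μ :=
        setIntegral_le_integral (integrable_const _) (.of_forall fun _ ↦ (Real.exp_pos _).le)
      _ = Real.exp (r * (θ + B)) := by simp
  calc mgf Y μ r = ∫ ω in A, Real.exp (r * Y ω) ∂μ + ∫ ω in Aᶜ, Real.exp (r * Y ω) ∂μ :=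
        (integral_add_compl (hm A hA) hY_int).symm
    _ ≤ _ := add_le_add hdrift_part hlow_part

lemma mul_integral_le_cgf {X : Ω → ℝ} {r : ℝ} (hX : Integrable X μ)
    (hexp : Integrable (fun ω ↦ Real.exp (r * X ω)) μ) : r * ∫ ω, X ω ∂μ ≤ cgf X μ r := by
  rw [cgf, Real.le_log_iff_exp_le (mgf_pos hexp), ← integral_const_mul]
  exact convexOn_exp.map_integral_le Real.continuous_exp.continuousOn isClosed_univ
    (.of_forall fun _ ↦ Set.mem_univ _) (hX.const_mul r) hexp

end Moments

section Drift

variable {Ω : Type*} {mΩ : MeasurableSpace Ω} {μ : Measure Ω} {Z : ℕ → Ω → ℝ} {c θ r : ℝ}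

lemma ae_abs_add_sub_le_mul_of_abs_succ_sub_le
    (hbdd : ∀ t, ∀ᵐ ω ∂μ, |Z (t + 1) ω - Z t ω| ≤ c) (s n : ℕ) :
    ∀ᵐ ω ∂μ, |Z (s + n) ω - Z s ω| ≤ n * c := by
  filter_upwards [ae_all_iff.2 hbdd] with ω hω
  have hdist := dist_le_range_sum_of_dist_le (f := fun k ↦ Z (s + k) ω) (d := fun _ ↦ c) n
    fun {k} _ ↦ by simpa [dist_comm (Z (s + k) ω), Real.dist_eq, add_assoc] using hω (s + k)
  simpa [dist_comm (Z s ω), Real.dist_eq] using hdist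

lemma ae_le_add_mul_of_abs_succ_sub_le (hstart : ∀ᵐ ω ∂μ, Z 0 ω ≤ θ)
    (hbdd : ∀ t, ∀ᵐ ω ∂μ, |Z (t + 1) ω - Z t ω| ≤ c) (t : ℕ) : ∀ᵐ ω ∂μ, Z t ω ≤ θ + t * c := by
  filter_upwards [hstart, ae_abs_add_sub_le_mul_of_abs_succ_sub_le hbdd 0 t] with ω h0 hω
  rw [zero_add] at hω
  linarith [le_of_abs_le hω]

lemma integrable_of_abs_succ_sub_le [IsFiniteMeasure μ] (hmeas : ∀ t, AEMeasurable (Z t) μ)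
    (hstart : Integrable (Z 0) μ) (hbdd : ∀ t, ∀ᵐ ω ∂μ, |Z (t + 1) ω - Z t ω| ≤ c) (t : ℕ) :
    Integrable (Z t) μ := by
  have hdiff : Integrable (Z t - Z 0) μ :=
    .of_bound ((hmeas t).sub (hmeas 0)).aestronglyMeasurable (t * c)
      (by simpa using ae_abs_add_sub_le_mul_of_abs_succ_sub_le hbdd 0 t)
  simpa using hdiff.add hstart

lemma integrable_exp_mul_of_abs_succ_sub_le [IsFiniteMeasure μ]
    (hmeas : ∀ t, AEMeasurable (Z t) μ) (hstart : ∀ᵐ ω ∂μ, Z 0 ω ≤ θ)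
    (hbdd : ∀ t, ∀ᵐ ω ∂μ, |Z (t + 1) ω - Z t ω| ≤ c) (hr : 0 ≤ r) (t : ℕ) :
    Integrable (fun ω ↦ Real.exp (r * Z t ω)) μ :=
  integrable_exp_mul_of_le r _ hr (hmeas t) (ae_le_add_mul_of_abs_succ_sub_le hstart hbdd t)

variable [IsProbabilityMeasure μ] {ℱ : Filtration ℕ mΩ} {t₀ : ℕ} {a : ℝ}

lemma mgf_le_of_multistep_drift (hZ : Adapted ℱ Z) (hstart : ∀ᵐ ω ∂μ, Z 0 ω ≤ θ) (ht₀ : 0 < t₀)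
    (hdrift : ∀ t, ∀ᵐ ω ∂μ, θ ≤ Z t ω → (μ[Z (t + t₀) - Z t | ℱ t]) ω ≤ -a)
    (hbdd : ∀ t, ∀ᵐ ω ∂μ, |Z (t + 1) ω - Z t ω| ≤ c) (hr : 0 ≤ r) (hra : r * a ≤ 1)
    (hrc : r * (t₀ * c) ≤ 1) (hgap : 0 < r * a - (r * (t₀ * c)) ^ 2) (t : ℕ) :
    mgf (Z t) μ r ≤ Real.exp (r * (θ + t₀ * c)) / (r * a - (r * (t₀ * c)) ^ 2) := by
  have hc : 0 ≤ c := by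
    obtain ⟨ω, hω⟩ := (hbdd 0).exists
    exact (abs_nonneg _).trans hω
  have hmeas (t : ℕ) : AEMeasurable (Z t) μ := ((hZ t).mono (ℱ.le t) le_rfl).aemeasurable
  have hexp := integrable_exp_mul_of_abs_succ_sub_le hmeas hstart hbdd hr
  refine le_div_of_block_contraction (u := fun t ↦ mgf (Z t) μ r) ht₀ (Real.exp_pos _).le hgap
    (by linarith [sq_nonneg (r * (t₀ * c))]) (fun t ht ↦ ?_) (fun t ↦ ?_) t
  · calc mgf (Z t) μ r ≤ ∫ _, Real.exp (r * (θ + t₀ * c)) ∂μ := by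
          refine integral_mono_ae (hexp t) (integrable_const _) ?_
          filter_upwards [ae_le_add_mul_of_abs_succ_sub_le hstart hbdd t] with ω hω
          have hω' : Z t ω ≤ θ + t₀ * c := hω.trans (by gcongr)
          gcongr
      _ = Real.exp (r * (θ + t₀ * c)) := by simp
  · exact mgf_le_of_condExp_sub_le (ℱ.le t) (hZ t) (hmeas _) hr hra hrc (hexp t) (hexp _)
      (ae_abs_add_sub_le_mul_of_abs_succ_sub_le hbdd t t₀) (hdrift t)

lemma integral_le_of_multistep_drift (hZ : Adapted ℱ Z) (hstart : ∀ᵐ ω ∂μ, Z 0 ω ≤ θ)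
    (hstart_int : Integrable (Z 0) μ) (ht₀ : 0 < t₀)
    (hdrift : ∀ t, ∀ᵐ ω ∂μ, θ ≤ Z t ω → (μ[Z (t + t₀) - Z t | ℱ t]) ω ≤ -a)
    (hbdd : ∀ t, ∀ᵐ ω ∂μ, |Z (t + 1) ω - Z t ω| ≤ c) (hr : 0 < r) (hra : r * a ≤ 1)
    (hrc : r * (t₀ * c) ≤ 1) (hgap : 0 < r * a - (r * (t₀ * c)) ^ 2) (t : ℕ) :
    ∫ ω, Z t ω ∂μ ≤ θ + t₀ * c - Real.log (r * a - (r * (t₀ * c)) ^ 2) / r := by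
  have hmeas (t : ℕ) : AEMeasurable (Z t) μ := ((hZ t).mono (ℱ.le t) le_rfl).aemeasurable
  have hexp := integrable_exp_mul_of_abs_succ_sub_le hmeas hstart hbdd hr.le t
  have hlog : r * ∫ ω, Z t ω ∂μ ≤
      r * (θ + t₀ * c) - Real.log (r * a - (r * (t₀ * c)) ^ 2) := by
    calc r * ∫ ω, Z t ω ∂μ ≤ cgf (Z t) μ r :=
          mul_integral_le_cgf (integrable_of_abs_succ_sub_le hmeas hstart_int hbdd t) hexp
      _ ≤ Real.log (Real.exp (r * (θ + t₀ * c)) / (r * a - (r * (t₀ * c)) ^ 2)) :=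
        Real.log_le_log (mgf_pos hexp)
          (mgf_le_of_multistep_drift hZ hstart ht₀ hdrift hbdd hr.le hra hrc hgap t)
      _ = r * (θ + t₀ * c) - Real.log (r * a - (r * (t₀ * c)) ^ 2) := by
        rw [Real.log_div (Real.exp_ne_zero _) hgap.ne', Real.log_exp]
  calc ∫ ω, Z t ω ∂μ ≤ (r * (θ + t₀ * c) - Real.log (r * a - (r * (t₀ * c)) ^ 2)) / r :=
        (le_div_iff₀' hr).2 hlog
    _ = θ + t₀ * c - Real.log (r * a - (r * (t₀ * c)) ^ 2) / r := by field_simp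

end Drift

theorem stmt3_general {Ω : Type*} {mΩ : MeasurableSpace Ω} {μ : Measure Ω}
    [IsProbabilityMeasure μ] {ℱ : Filtration ℕ mΩ} {Z : ℕ → Ω → ℝ} (hadapted : Adapted ℱ Z)
    {t₀ : ℕ} (ht₀ : 0 < t₀) {θ ν νmax : ℝ} (hstart : ∀ᵐ ω ∂μ, Z 0 ω ≤ θ)
    (hstart_int : Integrable (Z 0) μ) (hν : 0 < ν) (hννmax : ν ≤ νmax)
    (hdrift : ∀ t, ∀ᵐ ω ∂μ, θ ≤ Z t ω → (μ[Z (t + t₀) - Z t | ℱ t]) ω ≤ -ν * t₀)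
    (hbdd : ∀ t, ∀ᵐ ω ∂μ, |Z (t + 1) ω - Z t ω| ≤ νmax) (t : ℕ) :
    ∫ ω, Z t ω ∂μ ≤
      θ + t₀ * νmax + t₀ * (4 * νmax ^ 2 / ν) * Real.log (8 * νmax ^ 2 / ν ^ 2) := by
  have hνmax : 0 < νmax := hν.trans_le hννmax
  have hratio : ν / νmax ≤ 1 := (div_le_one hνmax).2 hννmax
  set r : ℝ := ν / (4 * t₀ * νmax ^ 2) with hr
  have hrν : r * (ν * t₀) = (ν / νmax) ^ 2 / 4 := by rw [hr]; field_simp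
  have hrνmax : r * (t₀ * νmax) = ν / νmax / 4 := by rw [hr]; field_simp
  have hgap : r * (ν * t₀) - (r * (t₀ * νmax)) ^ 2 = 3 * ν ^ 2 / (16 * νmax ^ 2) := by
    rw [hrν, hrνmax]; field_simp; norm_num
  have hmain := integral_le_of_multistep_drift (a := ν * t₀) (r := r) hadapted hstart hstart_int ht₀
    (by simpa only [neg_mul] using hdrift) hbdd (by positivity)
    (by rw [hrν]; linarith [pow_le_one₀ (n := 2) (by positivity) hratio])
    (by rw [hrνmax]; linarith) (by rw [hgap]; positivity) t
  have hlog : -Real.log (3 * ν ^ 2 / (16 * νmax ^ 2)) ≤ Real.log (8 * νmax ^ 2 / ν ^ 2) := by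
    rw [← Real.log_inv, inv_div]
    refine Real.log_le_log (by positivity) ?_
    rw [div_le_div_iff₀ (by positivity) (by positivity)]
    nlinarith [mul_pos (pow_pos hνmax 2) (pow_pos hν 2)]
  calc ∫ ω, Z t ω ∂μ
      ≤ θ + t₀ * νmax - Real.log (3 * ν ^ 2 / (16 * νmax ^ 2)) / r := by rwa [hgap] at hmain
    _ = θ + t₀ * νmax
        + t₀ * (4 * νmax ^ 2 / ν) * -Real.log (3 * ν ^ 2 / (16 * νmax ^ 2)) := by
      rw [hr]; field_simp; ring
    _ ≤ _ := by gcongr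

/-- Multi-step Lyapunov drift lemma, expectation bound: if the
adapted process `Z` starts at `0`, has a negative `t₀`-step conditional drift
`≤ -ν t₀` on the event `{Z t ≥ θ}`, and bounded increments `|Z (t+1) - Z t| ≤ ν_max`,
then `E[Z t] ≤ θ + t₀ ν_max + t₀ (4 ν_max² / ν) log (8 ν_max² / ν²)` for all `t`. -/
theorem stmt3 {Ω : Type*} {mΩ : MeasurableSpace Ω} (μ : Measure Ω) [IsProbabilityMeasure μ]
    (ℱ : Filtration ℕ mΩ) (Z : ℕ → Ω → ℝ) (hadapted : Adapted ℱ Z)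
    (hZ0 : ∀ ω, Z 0 ω = 0)
    (t₀ : ℕ) (ht₀ : 0 < t₀) (θ ν νmax : ℝ)
    (hθ : 0 ≤ θ) (hν : 0 < ν) (hννmax : ν ≤ νmax)
    (hdrift : ∀ t, ∀ᵐ ω ∂μ, θ ≤ Z t ω →
      (μ[Z (t + t₀) - Z t | ℱ t]) ω ≤ -ν * t₀)
    (hbdd : ∀ t, ∀ᵐ ω ∂μ, |Z (t + 1) ω - Z t ω| ≤ νmax) :
    ∀ t, ∫ ω, Z t ω ∂μ ≤
      θ + t₀ * νmax + t₀ * (4 * νmax ^ 2 / ν) * Real.log (8 * νmax ^ 2 / ν ^ 2) :=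
  stmt3_general hadapted ht₀ (.of_forall fun ω ↦ (hZ0 ω).trans_le hθ)
    ((integrable_zero Ω ℝ μ).congr (.of_forall fun ω ↦ (hZ0 ω).symm)) hν hννmax hdrift hbdd
end

section
/- Let A ∈ ℝ^{n×n}, B ∈ ℝ^{n×m} with ‖B‖₂ ≤ κ_B, let K ∈ ℝ^{m×n} be (κ,ρ)-strongly stable with respect to (A,B), set Ã = A − BK, and let H ≥ 1 and a > 0. Suppose for each time s and each i ∈ {1,…,H} there is a matrix M_s^{[i]} ∈ ℝ^{m×n} with ‖M_s^{[i]}‖₂ ≤ a(1−ρ)^i. Define, for integers t and i ≥ 1, the disturbance-state transfer matrix Ψ_{t,i} = Ã^{i−1}·1(i ≤ H) + Σ_{j=1}^{H} Ã^{j−1} B M_{t−j}^{[i−j]}·1(1 ≤ i−j ≤ H). Then ‖Ψ_{t,i}‖₂ ≤ κ²(1−ρ)^{i−1}·1(i ≤ H) + H a κ² κ_B (1−ρ)^{i−1}. -/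
/-- `ℝ^k` with the Euclidean norm; linear maps between such spaces, with the
operator norm, play the role of matrices with the spectral norm. -/
abbrev Euc (k : ℕ) := EuclideanSpace ℝ (Fin k)

/-- `K` is `(κ, ρ)`-strongly stable with respect to `(A, B)`:
`κ ≥ 1`, `ρ ∈ (0,1]`, `‖K‖₂ ≤ κ`, and there are `U` (invertible) and `L` with
`A - B K = U L U⁻¹`, `‖U‖₂ ≤ κ`, `‖U⁻¹‖₂ ≤ κ`, `‖L‖₂ ≤ 1 - ρ`. -/
def IsStronglyStable {n m : ℕ} (A : Euc n →L[ℝ] Euc n) (B : Euc m →L[ℝ] Euc n)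
    (K : Euc n →L[ℝ] Euc m) (κ ρ : ℝ) : Prop :=
  1 ≤ κ ∧ 0 < ρ ∧ ρ ≤ 1 ∧ ‖K‖ ≤ κ ∧
    ∃ (U : Euc n ≃L[ℝ] Euc n) (L : Euc n →L[ℝ] Euc n),
      A - B ∘L K = (U : Euc n →L[ℝ] Euc n) ∘L L ∘L (U.symm : Euc n →L[ℝ] Euc n) ∧
      ‖(U : Euc n →L[ℝ] Euc n)‖ ≤ κ ∧ ‖(U.symm : Euc n →L[ℝ] Euc n)‖ ≤ κ ∧
      ‖L‖ ≤ 1 - ρ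

/-!
A conjugate `T = U L U⁻¹` has powers `T ^ k = U L ^ k U⁻¹`, so `‖T ^ k‖ ≤ κ² (1 - ρ) ^ k`. In the
sum defining `Ψ_{t,i}`, the power `j - 1` of `Ã` and the decay exponent `i - j` of `M_{t-j}^{[i-j]}`
add up to `i - 1` whatever `j` is. Hence all of the at most `H` nonzero terms obey the same bound.
-/

theorem norm_units_conj_pow_le {R : Type*} [SeminormedRing R] (u : Rˣ) (x : R) (k : ℕ) :
    ‖(u * x * ↑u⁻¹ : R) ^ k‖ ≤ ‖(u : R)‖ * ‖x ^ k‖ * ‖(↑u⁻¹ : R)‖ := by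
  rw [Units.conj_pow]
  exact norm_mul₃_le

section Operators

variable {𝕜 E F : Type*} [NontriviallyNormedField 𝕜]
  [SeminormedAddCommGroup E] [NormedSpace 𝕜 E] [SeminormedAddCommGroup F] [NormedSpace 𝕜 F]

theorem opNorm_pow_le (L : E →L[𝕜] E) : ∀ k : ℕ, ‖L ^ k‖ ≤ ‖L‖ ^ k
  | 0 => by rw [pow_zero, pow_zero]; exact ContinuousLinearMap.norm_id_le
  | k + 1 => norm_pow_le' L k.succ_pos

theorem opNorm_conj_pow_le {L : E →L[𝕜] E} {U : E ≃L[𝕜] E} {κ r : ℝ}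
    (hU : ‖(U : E →L[𝕜] E)‖ ≤ κ) (hU' : ‖(U.symm : E →L[𝕜] E)‖ ≤ κ) (hL : ‖L‖ ≤ r) (k : ℕ) :
    ‖((U : E →L[𝕜] E) ∘L L ∘L (U.symm : E →L[𝕜] E)) ^ k‖ ≤ κ ^ 2 * r ^ k := by
  have hκ : 0 ≤ κ := (norm_nonneg _).trans hU
  calc ‖((U : E →L[𝕜] E) ∘L L ∘L (U.symm : E →L[𝕜] E)) ^ k‖
      ≤ ‖(U : E →L[𝕜] E)‖ * ‖L ^ k‖ * ‖(U.symm : E →L[𝕜] E)‖ :=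
        norm_units_conj_pow_le U.toUnit L k
    _ ≤ κ * ‖L‖ ^ k * κ := by
        gcongr
        exact opNorm_pow_le L k
    _ ≤ κ * r ^ k * κ := by gcongr
    _ = κ ^ 2 * r ^ k := by ring

/-- The disturbance-state transfer operator `Ψ_{t,i}` of a disturbance-action policy with closed
loop `T = A - B K` and memory `H`, for lags `1 ≤ i`: the coefficient of the disturbance `w_{t-i}`
in the state reached at time `t` from the state `0` at time `t - H`. The operator `M_s^{[i]}` is
written `M s i`. The truncated subtraction `i - j` is harmless, since the condition `1 ≤ i - j`
means `j < i`. -/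
def disturbanceStateTransfer (T : E →L[𝕜] E) (B : F →L[𝕜] E) (M : ℤ → ℕ → E →L[𝕜] F)
    (H : ℕ) (t : ℤ) (i : ℕ) : E →L[𝕜] E :=
  (if i ≤ H then T ^ (i - 1) else 0) +
    ∑ j ∈ Finset.Icc 1 H,
      if 1 ≤ i - j ∧ i - j ≤ H then (T ^ (j - 1)) ∘L (B ∘L M (t - (j : ℤ)) (i - j)) else 0

variable {T : E →L[𝕜] E} {B : F →L[𝕜] E} {C r b a : ℝ}

theorem opNorm_pow_comp_comp_le {N : E →L[𝕜] F} {p q : ℕ} (hT : ‖T ^ p‖ ≤ C * r ^ p)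
    (hB : ‖B‖ ≤ b) (hN : ‖N‖ ≤ a * r ^ q) :
    ‖(T ^ p) ∘L (B ∘L N)‖ ≤ a * C * b * r ^ (p + q) := by
  have hb : 0 ≤ b := (norm_nonneg B).trans hB
  have hC : 0 ≤ C * r ^ p := (norm_nonneg _).trans hT
  calc ‖(T ^ p) ∘L (B ∘L N)‖
      ≤ ‖T ^ p‖ * ‖B ∘L N‖ := ContinuousLinearMap.opNorm_comp_le _ _
    _ ≤ ‖T ^ p‖ * (‖B‖ * ‖N‖) := by
        gcongr
        exact ContinuousLinearMap.opNorm_comp_le _ _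
    _ ≤ C * r ^ p * (b * (a * r ^ q)) := by gcongr
    _ = a * C * b * r ^ (p + q) := by ring

/-- The time lag is written `k + 1`, so that the exponent `k` involves no truncated subtraction. -/
theorem stmt6_general (hr : 0 ≤ r) (hT : ∀ k, ‖T ^ k‖ ≤ C * r ^ k) (hB : ‖B‖ ≤ b) (ha : 0 ≤ a)
    {M : ℤ → ℕ → E →L[𝕜] F} {H : ℕ} (hM : ∀ s, ∀ i ∈ Finset.Icc 1 H, ‖M s i‖ ≤ a * r ^ i)
    (t : ℤ) (k : ℕ) :
    ‖disturbanceStateTransfer T B M H t (k + 1)‖ ≤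
      C * r ^ k * (if k + 1 ≤ H then 1 else 0) + H * a * C * b * r ^ k := by
  have hb : 0 ≤ b := (norm_nonneg B).trans hB
  have hC : 0 ≤ C := by simpa using (norm_nonneg _).trans (hT 0)
  refine norm_add_le_of_le ?_ ?_
  · split_ifs
    · simpa using hT k
    · simp
  · have hterm : ∀ j ∈ Finset.Icc 1 H,
        ‖if 1 ≤ k + 1 - j ∧ k + 1 - j ≤ H then
          (T ^ (j - 1)) ∘L (B ∘L M (t - (j : ℤ)) (k + 1 - j)) else 0‖ ≤ a * C * b * r ^ k := by
      intro j hj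
      split_ifs with hlag
      · have hexp : j - 1 + (k + 1 - j) = k := by grind
        simpa only [hexp] using
          opNorm_pow_comp_comp_le (hT (j - 1)) hB (hM (t - j) _ (Finset.mem_Icc.2 hlag))
      · rw [norm_zero]
        positivity
    calc _ ≤ ∑ _j ∈ Finset.Icc 1 H, a * C * b * r ^ k := norm_sum_le_of_le _ hterm
      _ = H * a * C * b * r ^ k := by
        rw [Finset.sum_const, Nat.card_Icc, Nat.add_sub_cancel, nsmul_eq_mul]
        ring

end Operators

theorem IsStronglyStable.opNorm_pow_le {n m : ℕ} {A : Euc n →L[ℝ] Euc n} {B : Euc m →L[ℝ] Euc n}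
    {K : Euc n →L[ℝ] Euc m} {κ ρ : ℝ} (h : IsStronglyStable A B K κ ρ) (k : ℕ) :
    ‖(A - B ∘L K) ^ k‖ ≤ κ ^ 2 * (1 - ρ) ^ k := by
  obtain ⟨-, -, -, -, U, L, hconj, hU, hU', hL⟩ := h
  rw [hconj]
  exact opNorm_conj_pow_le hU hU' hL k

/-- Bound on the disturbance-state transfer matrix
`Ψ_{t,i} = Ã^{i−1}·1(i ≤ H) + Σ_{j=1}^{H} Ã^{j−1} B M_{t−j}^{[i−j]}·1(1 ≤ i−j ≤ H)`
of a disturbance-action policy: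
`‖Ψ_{t,i}‖₂ ≤ κ²(1−ρ)^{i−1}·1(i ≤ H) + H a κ² κ_B (1−ρ)^{i−1}`. -/
theorem stmt6 {n m : ℕ} (A : Euc n →L[ℝ] Euc n) (B : Euc m →L[ℝ] Euc n)
    (K : Euc n →L[ℝ] Euc m) (κ ρ κB : ℝ)
    (hstab : IsStronglyStable A B K κ ρ) (hB : ‖B‖ ≤ κB)
    (H : ℕ) (hH : 1 ≤ H) (a : ℝ) (ha : 0 < a)
    (M : ℤ → ℕ → (Euc n →L[ℝ] Euc m))
    (hM : ∀ s : ℤ, ∀ i ∈ Finset.Icc 1 H, ‖M s i‖ ≤ a * (1 - ρ) ^ i)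
    (t : ℤ) (i : ℕ) (hi : 1 ≤ i) :
    ‖(if i ≤ H then (A - B ∘L K) ^ (i - 1) else 0) +
        ∑ j ∈ Finset.Icc 1 H,
          (if 1 ≤ i - j ∧ i - j ≤ H then
            ((A - B ∘L K) ^ (j - 1)) ∘L (B ∘L M (t - (j : ℤ)) (i - j)) else 0)‖
      ≤ κ ^ 2 * (1 - ρ) ^ (i - 1) * (if i ≤ H then 1 else 0) +
          (H : ℝ) * a * κ ^ 2 * κB * (1 - ρ) ^ (i - 1) := by
  obtain ⟨k, rfl⟩ := Nat.exists_eq_add_of_le' hi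
  exact stmt6_general (sub_nonneg.2 hstab.2.2.1) hstab.opNorm_pow_le hB ha.le hM t k
end

section
/- Consider the linear system x_{t+1} = A x_t + B u_t + w_t with x_1 = 0, where A ∈ ℝ^{n×n}, B ∈ ℝ^{n×m} with ‖B‖₂ ≤ κ_B, K ∈ ℝ^{m×n} is (κ,ρ)-strongly stable with respect to (A,B), the disturbances satisfy ‖w_t‖ ≤ W for all t (with the convention w_s = 0 for s ≤ 0), and the control is the disturbance-action policy u_t = −K x_t + Σ_{i=1}^{H} M_t^{[i]} w_{t−i} with weights satisfying ‖M_t^{[i]}‖₂ ≤ a(1−ρ)^i for all t and i ∈ {1,…,H}. Assume κ²(1−ρ)^H < 1 and H κ_B κ² ≥ 1, and set D = W(κ² + H a κ_B κ²) / (ρ(1 − κ²(1−ρ)^H)). Then for every t ≥ 1, ‖x_t‖ ≤ D and ‖u_t‖ ≤ (κ + 1) D. -/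
/-!
In the coordinates `y = U⁻¹ x` the closed loop `A - B K` acts as a `(1 - ρ)`-contraction, and the
inputs other than the feedback `-K x` enter as a forcing term of norm at most `β = κ_B H a W + W`.
Hence `‖y_{t+1}‖ ≤ (1 - ρ) ‖y_t‖ + κ β`, so `‖y_t‖` never exceeds the fixed point `κ β / ρ` of this
recursion, and `‖x_t‖ ≤ κ² β / ρ`. For the control, the geometric series bounds the disturbance
part of the policy by `a W / ρ`, which `H κ_B κ² ≥ 1` makes at most the state bound. The factor
`1 - κ² (1 - ρ)^H` in the denominator of `D` only enlarges the bound.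
-/

section OrderedField

variable {R : Type*} [Field R] [LinearOrder R] [IsStrictOrderedRing R]

theorem le_div_of_le_one_sub_mul_add {z : ℕ → R} {ρ b : R} {t₀ : ℕ} (hρ : 0 < ρ) (hρ1 : ρ ≤ 1)
    (hz₀ : z t₀ ≤ b / ρ) (hz : ∀ t, t₀ ≤ t → z (t + 1) ≤ (1 - ρ) * z t + b) :
    ∀ t, t₀ ≤ t → z t ≤ b / ρ := by
  intro t ht
  induction t, ht using Nat.le_induction with
  | base => exact hz₀
  | succ t ht ih =>
    calc z (t + 1) ≤ (1 - ρ) * z t + b := hz t ht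
      _ ≤ (1 - ρ) * (b / ρ) + b := by gcongr
      _ = b / ρ := by
        field_simp
        ring

theorem div_le_div_mul_one_sub {c ρ ε : R} (hc : 0 ≤ c) (hρ : 0 < ρ) (hε : 0 ≤ ε) (hε1 : ε < 1) :
    c / ρ ≤ c / (ρ * (1 - ε)) :=
  div_le_div_of_nonneg_left hc (mul_pos hρ (sub_pos.2 hε1))
    (mul_le_of_le_one_right hρ.le (sub_le_self 1 hε))

theorem sum_Icc_one_pow_le_natCast {q : R} (hq : 0 ≤ q) (hq1 : q ≤ 1) (H : ℕ) :
    ∑ i ∈ Finset.Icc 1 H, q ^ i ≤ H := by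
  simpa using Finset.sum_le_card_nsmul (Finset.Icc 1 H) (q ^ ·) 1 fun i _ => pow_le_one₀ hq hq1

theorem sum_Icc_one_pow_le_one_div {q : R} (hq : 0 ≤ q) (hq1 : q < 1) (H : ℕ) :
    ∑ i ∈ Finset.Icc 1 H, q ^ i ≤ 1 / (1 - q) :=
  calc ∑ i ∈ Finset.Icc 1 H, q ^ i ≤ q ^ 1 / (1 - q) :=
        geom_sum_Ico_le_of_lt_one (n := H + 1) hq hq1
    _ ≤ 1 / (1 - q) := div_le_div_of_nonneg_right (by simpa using hq1.le) (sub_pos.2 hq1).le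

end OrderedField

section NormedSpaces

variable {𝕜 E F : Type*} [NontriviallyNormedField 𝕜]
  [SeminormedAddCommGroup E] [NormedSpace 𝕜 E] [SeminormedAddCommGroup F] [NormedSpace 𝕜 F]

theorem norm_sum_apply_le_sum_mul {ι : Type*} {s : Finset ι} {N : ι → E →L[𝕜] F} {v : ι → E}
    {c : ι → ℝ} {W : ℝ} (hN : ∀ i ∈ s, ‖N i‖ ≤ c i) (hv : ∀ i ∈ s, ‖v i‖ ≤ W) :
    ‖∑ i ∈ s, N i (v i)‖ ≤ (∑ i ∈ s, c i) * W := by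
  rw [Finset.sum_mul]
  exact norm_sum_le_of_le s fun i hi => (N i).le_of_opNorm_le_of_le (hN i hi) (hv i hi)

section GeometricGains

variable {N : ℕ → E →L[𝕜] F} {v : ℕ → E} {a q W : ℝ} {H : ℕ}

theorem norm_sum_Icc_one_apply_le_mul_natCast (ha : 0 ≤ a) (hq : 0 ≤ q) (hq1 : q ≤ 1) (hW : 0 ≤ W)
    (hN : ∀ i ∈ Finset.Icc 1 H, ‖N i‖ ≤ a * q ^ i) (hv : ∀ i ∈ Finset.Icc 1 H, ‖v i‖ ≤ W) :
    ‖∑ i ∈ Finset.Icc 1 H, N i (v i)‖ ≤ a * H * W := by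
  refine (norm_sum_apply_le_sum_mul hN hv).trans ?_
  rw [← Finset.mul_sum]
  gcongr
  exact sum_Icc_one_pow_le_natCast hq hq1 H

theorem norm_sum_Icc_one_apply_le_mul_one_div (ha : 0 ≤ a) (hq : 0 ≤ q) (hq1 : q < 1) (hW : 0 ≤ W)
    (hN : ∀ i ∈ Finset.Icc 1 H, ‖N i‖ ≤ a * q ^ i) (hv : ∀ i ∈ Finset.Icc 1 H, ‖v i‖ ≤ W) :
    ‖∑ i ∈ Finset.Icc 1 H, N i (v i)‖ ≤ a * (1 / (1 - q)) * W := by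
  refine (norm_sum_apply_le_sum_mul hN hv).trans ?_
  rw [← Finset.mul_sum]
  gcongr
  exact sum_Icc_one_pow_le_one_div hq hq1 H

end GeometricGains

/-- The operator `T` is conjugate to an operator of norm at most `1 - ρ` by an isomorphism which,
like its inverse, has norm at most `κ`. Strong stability of `K` with respect to `(A, B)` asks this
of the closed loop `T = A - B K`. -/
def IsConjContraction (T : E →L[𝕜] E) (κ ρ : ℝ) : Prop :=
  ∃ (U : E ≃L[𝕜] E) (L : E →L[𝕜] E),
    T = (U : E →L[𝕜] E) ∘L L ∘L (U.symm : E →L[𝕜] E) ∧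
    ‖(U : E →L[𝕜] E)‖ ≤ κ ∧ ‖(U.symm : E →L[𝕜] E)‖ ≤ κ ∧ ‖L‖ ≤ 1 - ρ

namespace IsConjContraction

variable {T : E →L[𝕜] E} {κ ρ : ℝ}

theorem le_one (hT : IsConjContraction T κ ρ) : ρ ≤ 1 := by
  obtain ⟨-, L, -, -, -, hL⟩ := hT
  exact sub_nonneg.1 ((norm_nonneg L).trans hL)

theorem norm_le_of_forced_recurrence (hT : IsConjContraction T κ ρ) (hρ : 0 < ρ)
    {x v : ℕ → E} {β : ℝ} {t₀ : ℕ} (hx₀ : x t₀ = 0)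
    (hx : ∀ t, t₀ ≤ t → x (t + 1) = T (x t) + v t) (hv : ∀ t, t₀ ≤ t → ‖v t‖ ≤ β) :
    ∀ t, t₀ ≤ t → ‖x t‖ ≤ κ ^ 2 * β / ρ := by
  have hρ1 : ρ ≤ 1 := hT.le_one
  obtain ⟨U, L, rfl, hU, hU', hL⟩ := hT
  have hκ : 0 ≤ κ := (norm_nonneg _).trans hU
  have hβ : 0 ≤ β := (norm_nonneg _).trans (hv t₀ le_rfl)
  have hstep (t : ℕ) (ht : t₀ ≤ t) : ‖U.symm (x (t + 1))‖ ≤ (1 - ρ) * ‖U.symm (x t)‖ + κ * β := by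
    have hy : U.symm (x (t + 1)) = L (U.symm (x t)) + U.symm (v t) := by simp [hx t ht]
    rw [hy]
    exact norm_add_le_of_le (L.le_of_opNorm_le hL _)
      ((U.symm : E →L[𝕜] E).le_of_opNorm_le_of_le hU' (hv t ht))
  have hy₀ : ‖U.symm (x t₀)‖ ≤ κ * β / ρ := by
    rw [hx₀, map_zero, norm_zero]
    positivity
  intro t ht
  have hyt : ‖U.symm (x t)‖ ≤ κ * β / ρ :=
    le_div_of_le_one_sub_mul_add (z := fun t => ‖U.symm (x t)‖) hρ hρ1 hy₀ hstep t ht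
  calc ‖x t‖ = ‖(U : E →L[𝕜] E) (U.symm (x t))‖ := by simp
    _ ≤ κ * (κ * β / ρ) := (U : E →L[𝕜] E).le_of_opNorm_le_of_le hU hyt
    _ = κ ^ 2 * β / ρ := by ring

end IsConjContraction

theorem stmt7_general {A : E →L[𝕜] E} {B : F →L[𝕜] E} {K : E →L[𝕜] F} {κ ρ κB W a D : ℝ}
    (hρ : 0 < ρ) (hK : ‖K‖ ≤ κ) (hT : IsConjContraction (A - B ∘L K) κ ρ) (hB : ‖B‖ ≤ κB)
    {H : ℕ} (ha : 0 ≤ a) {w : ℤ → E} (hwW : ∀ s, ‖w s‖ ≤ W) {M : ℕ → ℕ → (E →L[𝕜] F)}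
    (hM : ∀ t, ∀ i ∈ Finset.Icc 1 H, ‖M t i‖ ≤ a * (1 - ρ) ^ i)
    (hHκ : 1 ≤ (H : ℝ) * κB * κ ^ 2)
    (hD : W * (κ ^ 2 + (H : ℝ) * a * κB * κ ^ 2) / ρ ≤ D)
    {x : ℕ → E} {u : ℕ → F} (hx1 : x 1 = 0)
    (hu : ∀ t : ℕ, 1 ≤ t →
      u t = -(K (x t)) + ∑ i ∈ Finset.Icc 1 H, M t i (w ((t : ℤ) - (i : ℤ))))
    (hx : ∀ t : ℕ, 1 ≤ t → x (t + 1) = A (x t) + B (u t) + w (t : ℤ)) :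
    ∀ t : ℕ, 1 ≤ t → ‖x t‖ ≤ D ∧ ‖u t‖ ≤ (κ + 1) * D := by
  have hW : 0 ≤ W := (norm_nonneg _).trans (hwW 0)
  have hq : 0 ≤ 1 - ρ := sub_nonneg.2 hT.le_one
  set p : ℕ → F := fun t => ∑ i ∈ Finset.Icc 1 H, M t i (w ((t : ℤ) - (i : ℤ)))
  have hpH (t : ℕ) : ‖p t‖ ≤ a * H * W :=
    norm_sum_Icc_one_apply_le_mul_natCast ha hq (sub_le_self 1 hρ.le) hW (hM t) fun _ _ => hwW _
  have hpρ (t : ℕ) : ‖p t‖ ≤ a * (1 / ρ) * W := by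
    simpa only [sub_sub_cancel] using norm_sum_Icc_one_apply_le_mul_one_div ha hq
      (sub_lt_self 1 hρ) hW (hM t) fun i _ => hwW ((t : ℤ) - (i : ℤ))
  have hforce (t : ℕ) : ‖B (p t) + w t‖ ≤ κB * (a * H * W) + W :=
    norm_add_le_of_le (B.le_of_opNorm_le_of_le hB (hpH t)) (hwW t)
  have hclosed (t : ℕ) (ht : 1 ≤ t) : x (t + 1) = (A - B ∘L K) (x t) + (B (p t) + w t) := by
    simp only [hx t ht, hu t ht, p, map_add, map_neg, sub_apply, ContinuousLinearMap.comp_apply]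
    abel
  have hxD (t : ℕ) (ht : 1 ≤ t) : ‖x t‖ ≤ D :=
    calc ‖x t‖ ≤ κ ^ 2 * (κB * (a * H * W) + W) / ρ :=
          hT.norm_le_of_forced_recurrence hρ hx1 hclosed (fun t _ => hforce t) t ht
      _ = W * (κ ^ 2 + (H : ℝ) * a * κB * κ ^ 2) / ρ := by ring
      _ ≤ D := hD
  have hpD (t : ℕ) : ‖p t‖ ≤ D :=
    calc ‖p t‖ ≤ a * (1 / ρ) * W := hpρ t
      _ = W * (a * 1) / ρ := by ring
      _ ≤ W * (κ ^ 2 + a * (H * κB * κ ^ 2)) / ρ := by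
        gcongr
        exact le_add_of_nonneg_of_le (sq_nonneg κ) (mul_le_mul_of_nonneg_left hHκ ha)
      _ = W * (κ ^ 2 + (H : ℝ) * a * κB * κ ^ 2) / ρ := by ring
      _ ≤ D := hD
  intro t ht
  refine ⟨hxD t ht, ?_⟩
  calc ‖u t‖ = ‖-(K (x t)) + p t‖ := by rw [hu t ht]
    _ ≤ κ * D + D := norm_add_le_of_le
        (by simpa only [norm_neg] using K.le_of_opNorm_le_of_le hK (hxD t ht)) (hpD t)
    _ = (κ + 1) * D := by ring

end NormedSpaces

/-- Boundedness of states and actions under a disturbance-action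
policy: for the linear system `x_{t+1} = A x_t + B u_t + w_t` with `x_1 = 0`,
`(κ,ρ)`-strongly stable `K`, `‖B‖₂ ≤ κ_B`, `‖w_t‖ ≤ W` (and `w_s = 0` for `s ≤ 0`),
and `u_t = -K x_t + Σ_{i=1}^H M_t^{[i]} w_{t-i}` with `‖M_t^{[i]}‖₂ ≤ a (1-ρ)^i`,
assuming `κ²(1-ρ)^H < 1` and `H κ_B κ² ≥ 1`, with
`D = W (κ² + H a κ_B κ²) / (ρ (1 - κ²(1-ρ)^H))`, one has `‖x_t‖ ≤ D` and
`‖u_t‖ ≤ (κ+1) D` for every `t ≥ 1`. -/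
theorem stmt7 {n m : ℕ} (A : Euc n →L[ℝ] Euc n) (B : Euc m →L[ℝ] Euc n)
    (K : Euc n →L[ℝ] Euc m) (κ ρ κB W a D : ℝ)
    (hstab : IsStronglyStable A B K κ ρ) (hB : ‖B‖ ≤ κB)
    (H : ℕ) (hH : 1 ≤ H) (ha : 0 < a)
    (w : ℤ → Euc n) (hw0 : ∀ s : ℤ, s ≤ 0 → w s = 0) (hwW : ∀ s : ℤ, ‖w s‖ ≤ W)
    (M : ℕ → ℕ → (Euc n →L[ℝ] Euc m))
    (hM : ∀ t : ℕ, ∀ i ∈ Finset.Icc 1 H, ‖M t i‖ ≤ a * (1 - ρ) ^ i)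
    (hcontr : κ ^ 2 * (1 - ρ) ^ H < 1) (hHκ : 1 ≤ (H : ℝ) * κB * κ ^ 2)
    (hD : D = W * (κ ^ 2 + (H : ℝ) * a * κB * κ ^ 2) /
      (ρ * (1 - κ ^ 2 * (1 - ρ) ^ H)))
    (x : ℕ → Euc n) (u : ℕ → Euc m)
    (hx1 : x 1 = 0)
    (hu : ∀ t : ℕ, 1 ≤ t →
      u t = -(K (x t)) + ∑ i ∈ Finset.Icc 1 H, M t i (w ((t : ℤ) - (i : ℤ))))
    (hx : ∀ t : ℕ, 1 ≤ t → x (t + 1) = A (x t) + B (u t) + w (t : ℤ)) :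
    ∀ t : ℕ, 1 ≤ t → ‖x t‖ ≤ D ∧ ‖u t‖ ≤ (κ + 1) * D := by
  obtain ⟨-, hρ, hρ1, hK, hT⟩ := hstab
  have hc : 0 ≤ W * (κ ^ 2 + (H : ℝ) * a * κB * κ ^ 2) :=
    mul_nonneg ((norm_nonneg _).trans (hwW 0)) (by nlinarith [sq_nonneg κ])
  exact stmt7_general hρ hK hT hB ha.le hwW hM hHκ
    (hD ▸ div_le_div_mul_one_sub hc hρ (by positivity) hcontr) hx1 hu hx
end

section
/- Under the hypotheses of the state-boundedness setting (linear system x_{t+1} = A x_t + B u_t + w_t with x_1 = 0, ‖B‖₂ ≤ κ_B, K (κ,ρ)-strongly stable, ‖w_t‖ ≤ W with w_s = 0 for s ≤ 0, disturbance-action policy u_t = −K x_t + Σ_{i=1}^{H} M_t^{[i]} w_{t−i} with ‖M_t^{[i]}‖₂ ≤ a(1−ρ)^i, κ²(1−ρ)^H < 1, H κ_B κ² ≥ 1, and D = W(κ² + H a κ_B κ²)/(ρ(1 − κ²(1−ρ)^H))), define for t > H the approximated state x̃_t = x_t − (A−BK)^H x_{t−H} and approximated action ũ_t = −K x̃_t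 + Σ_{i=1}^{H} M_t^{[i]} w_{t−i}. Then ‖x_t − x̃_t‖ ≤ κ²(1−ρ)^H D and ‖u_t − ũ_t‖ ≤ κ³(1−ρ)^H D. -/
/-!
The closed loop is `x_{t+1} = (A - BK) x_t + v_t` with `v_t = B (∑ᵢ M_t^{[i]} w_{t-i}) + w_t`, and
`‖v_t‖ ≤ V := (1 + H a κ_B) W`. In the coordinates `z = U⁻¹ x` the map `A - BK` becomes the
contraction `L`, so the ball of radius `κ V / ρ` is invariant for `z`, whence
`‖x_t‖ ≤ κ² V / ρ ≤ D`. The state error is `(A - BK)^H x_{t-H}`, where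
`‖(A - BK)^H‖ = ‖U L^H U⁻¹‖ ≤ κ² (1 - ρ)^H`, and the action error is `-K` applied to the state
error.
-/

theorem le_div_of_succ_le_one_sub_mul_add {R : Type*} [Field R] [LinearOrder R]
    [IsStrictOrderedRing R] {b : ℕ → R} {ρ c : R} {t₀ : ℕ} (hρ : 0 < ρ) (hρ1 : ρ ≤ 1)
    (hb₀ : b t₀ ≤ c / ρ) (hb : ∀ t, t₀ ≤ t → b (t + 1) ≤ (1 - ρ) * b t + c)
    {t : ℕ} (ht : t₀ ≤ t) : b t ≤ c / ρ := by
  induction t, ht using Nat.le_induction with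
  | base => exact hb₀
  | succ t ht ih =>
    calc b (t + 1) ≤ (1 - ρ) * b t + c := hb t ht
      _ ≤ (1 - ρ) * (c / ρ) + c := by gcongr
      _ = c / ρ := by field_simp; ring

theorem div_le_div_mul_one_sub_s8 {R : Type*} [Field R] [LinearOrder R] [IsStrictOrderedRing R]
    {c ρ q : R} (hc : 0 ≤ c) (hρ : 0 < ρ) (hq : 0 ≤ q) (hq1 : q < 1) :
    c / ρ ≤ c / (ρ * (1 - q)) :=
  div_le_div_of_nonneg_left hc (mul_pos hρ (sub_pos.2 hq1))
    (mul_le_of_le_one_right hρ.le (sub_le_self 1 hq))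

theorem norm_pow_le_pow_of_norm_one_le {R : Type*} [SeminormedRing R] {a : R} {r : ℝ}
    (h1 : ‖(1 : R)‖ ≤ 1) (ha : ‖a‖ ≤ r) (k : ℕ) : ‖a ^ k‖ ≤ r ^ k := by
  rcases k.eq_zero_or_pos with rfl | hk
  · simpa only [pow_zero] using h1
  · exact (norm_pow_le' a hk).trans (pow_le_pow_left₀ (norm_nonneg a) ha k)

section Operators

variable {𝕜 E F : Type*} [NontriviallyNormedField 𝕜]
  [SeminormedAddCommGroup E] [NormedSpace 𝕜 E] [SeminormedAddCommGroup F] [NormedSpace 𝕜 F]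

theorem norm_sum_clm_apply_le {ι : Type*} {s : Finset ι} {M : ι → E →L[𝕜] F} {w : ι → E}
    {a W : ℝ} (hM : ∀ i ∈ s, ‖M i‖ ≤ a) (hw : ∀ i ∈ s, ‖w i‖ ≤ W) :
    ‖∑ i ∈ s, M i (w i)‖ ≤ s.card * (a * W) :=
  (norm_sum_le_of_le s fun i hi ↦
    (M i).le_of_opNorm_le_of_le (hM i hi) (hw i hi)).trans_eq (by simp)

/-- Strong stability of a single operator: `T = U L U⁻¹` with `‖U‖, ‖U⁻¹‖ ≤ κ` and
`‖L‖ ≤ 1 - ρ`. The condition on `A - BK` in `IsStronglyStable A B K κ ρ` is the case of a Euclidean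
space. The range conditions on `κ` and `ρ` are not part of the definition. -/
def IsStronglyStableOperator (T : E →L[𝕜] E) (κ ρ : ℝ) : Prop :=
  ∃ (U : E ≃L[𝕜] E) (L : E →L[𝕜] E),
    T = (U : E →L[𝕜] E) ∘L L ∘L (U.symm : E →L[𝕜] E) ∧
    ‖(U : E →L[𝕜] E)‖ ≤ κ ∧ ‖(U.symm : E →L[𝕜] E)‖ ≤ κ ∧ ‖L‖ ≤ 1 - ρ

namespace IsStronglyStableOperator

variable {T : E →L[𝕜] E} {κ ρ : ℝ}

theorem norm_pow_le (hT : IsStronglyStableOperator T κ ρ) (k : ℕ) :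
    ‖T ^ k‖ ≤ κ ^ 2 * (1 - ρ) ^ k := by
  obtain ⟨U, L, rfl, hU, hU', hL⟩ := hT
  have hκ : 0 ≤ κ := (norm_nonneg _).trans hU
  have hr : 0 ≤ 1 - ρ := (norm_nonneg _).trans hL
  have hconj : ((U : E →L[𝕜] E) ∘L L ∘L (U.symm : E →L[𝕜] E)) ^ k =
      (U : E →L[𝕜] E) ∘L (L ^ k) ∘L (U.symm : E →L[𝕜] E) :=
    (map_pow U.conjContinuousAlgEquiv L k).symm
  have hLk : ‖L ^ k‖ ≤ (1 - ρ) ^ k :=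
    norm_pow_le_pow_of_norm_one_le ContinuousLinearMap.norm_id_le hL k
  rw [hconj]
  calc _ ≤ ‖(U : E →L[𝕜] E)‖ * (‖L ^ k‖ * ‖(U.symm : E →L[𝕜] E)‖) :=
        (ContinuousLinearMap.opNorm_comp_le _ _).trans
          (by gcongr; exact ContinuousLinearMap.opNorm_comp_le _ _)
    _ ≤ κ * ((1 - ρ) ^ k * κ) := by gcongr
    _ = κ ^ 2 * (1 - ρ) ^ k := by ring

theorem norm_trajectory_le (hT : IsStronglyStableOperator T κ ρ) (hρ : 0 < ρ)
    {x v : ℕ → E} {V : ℝ} {t₀ : ℕ} (hx₀ : x t₀ = 0)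
    (hx : ∀ t, t₀ ≤ t → x (t + 1) = T (x t) + v t) (hv : ∀ t, t₀ ≤ t → ‖v t‖ ≤ V)
    {t : ℕ} (ht : t₀ ≤ t) : ‖x t‖ ≤ κ ^ 2 * V / ρ := by
  obtain ⟨U, L, rfl, hU, hU', hL⟩ := hT
  have hκ : 0 ≤ κ := (norm_nonneg _).trans hU
  have hρ1 : ρ ≤ 1 := sub_nonneg.1 ((norm_nonneg _).trans hL)
  have hV : 0 ≤ V := (norm_nonneg _).trans (hv t₀ le_rfl)
  have hz₀ : ‖U.symm (x t₀)‖ ≤ κ * V / ρ := by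
    rw [hx₀, map_zero, norm_zero]
    positivity
  have hz : ∀ t, t₀ ≤ t → ‖U.symm (x (t + 1))‖ ≤ (1 - ρ) * ‖U.symm (x t)‖ + κ * V := by
    intro t ht
    have hsucc : U.symm (x (t + 1)) = L (U.symm (x t)) + U.symm (v t) := by simp [hx t ht]
    rw [hsucc]
    exact norm_add_le_of_le (L.le_of_opNorm_le hL _)
      ((U.symm : E →L[𝕜] E).le_of_opNorm_le_of_le hU' (hv t ht))
  calc ‖x t‖ = ‖U (U.symm (x t))‖ := by rw [U.apply_symm_apply]
    _ ≤ κ * (κ * V / ρ) := (U : E →L[𝕜] E).le_of_opNorm_le_of_le hU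
        (le_div_of_succ_le_one_sub_mul_add (b := fun t ↦ ‖U.symm (x t)‖) hρ hρ1 hz₀ hz ht)
    _ = κ ^ 2 * V / ρ := by ring

theorem norm_state_le {A : E →L[𝕜] E} {B : F →L[𝕜] E} {K : E →L[𝕜] F} {κB W a : ℝ}
    (hT : IsStronglyStableOperator (A - B ∘L K) κ ρ) (hB : ‖B‖ ≤ κB) (hρ : 0 < ρ)
    {H : ℕ} {w : ℤ → E} (hw : ∀ s, ‖w s‖ ≤ W)
    {M : ℕ → ℕ → E →L[𝕜] F} (hM : ∀ t, ∀ i ∈ Finset.Icc 1 H, ‖M t i‖ ≤ a)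
    {x : ℕ → E} {u : ℕ → F} (hx1 : x 1 = 0)
    (hu : ∀ t : ℕ, 1 ≤ t →
      u t = -(K (x t)) + ∑ i ∈ Finset.Icc 1 H, M t i (w ((t : ℤ) - (i : ℤ))))
    (hx : ∀ t : ℕ, 1 ≤ t → x (t + 1) = A (x t) + B (u t) + w (t : ℤ))
    {t : ℕ} (ht : 1 ≤ t) :
    ‖x t‖ ≤ W * (κ ^ 2 + H * a * κB * κ ^ 2) / ρ := by
  let S (t : ℕ) : F := ∑ i ∈ Finset.Icc 1 H, M t i (w ((t : ℤ) - (i : ℤ)))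
  have hS (t : ℕ) : ‖S t‖ ≤ H * (a * W) := by
    simpa using norm_sum_clm_apply_le (hM t) fun i _ ↦ hw ((t : ℤ) - (i : ℤ))
  have hv (t : ℕ) : ‖B (S t) + w t‖ ≤ κB * (H * (a * W)) + W :=
    norm_add_le_of_le (B.le_of_opNorm_le_of_le hB (hS t)) (hw t)
  have hclosed (t : ℕ) (ht : 1 ≤ t) : x (t + 1) = (A - B ∘L K) (x t) + (B (S t) + w t) := by
    simp only [hx t ht, hu t ht, S, map_add, map_neg, sub_apply, ContinuousLinearMap.comp_apply]
    abel
  exact (hT.norm_trajectory_le hρ hx1 hclosed (fun t _ ↦ hv t) ht).trans_eq (by ring)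

end IsStronglyStableOperator

theorem stmt8_general {A : E →L[𝕜] E} {B : F →L[𝕜] E} {K : E →L[𝕜] F} {κ ρ κB W a D : ℝ}
    (hT : IsStronglyStableOperator (A - B ∘L K) κ ρ) (hK : ‖K‖ ≤ κ) (hB : ‖B‖ ≤ κB) (hρ : 0 < ρ)
    {H : ℕ} {w : ℤ → E} (hw : ∀ s, ‖w s‖ ≤ W)
    {M : ℕ → ℕ → E →L[𝕜] F} (hM : ∀ t, ∀ i ∈ Finset.Icc 1 H, ‖M t i‖ ≤ a)
    (hD : W * (κ ^ 2 + H * a * κB * κ ^ 2) / ρ ≤ D)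
    {x : ℕ → E} {u : ℕ → F} (hx1 : x 1 = 0)
    (hu : ∀ t : ℕ, 1 ≤ t →
      u t = -(K (x t)) + ∑ i ∈ Finset.Icc 1 H, M t i (w ((t : ℤ) - (i : ℤ))))
    (hx : ∀ t : ℕ, 1 ≤ t → x (t + 1) = A (x t) + B (u t) + w (t : ℤ))
    {xtil : ℕ → E} {util : ℕ → F}
    (hxtil : ∀ t : ℕ, H < t → xtil t = x t - ((A - B ∘L K) ^ H) (x (t - H)))
    (hutil : ∀ t : ℕ, H < t →
      util t = -(K (xtil t)) + ∑ i ∈ Finset.Icc 1 H, M t i (w ((t : ℤ) - (i : ℤ))))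
    (t : ℕ) (ht : H < t) :
    ‖x t - xtil t‖ ≤ κ ^ 2 * (1 - ρ) ^ H * D ∧ ‖u t - util t‖ ≤ κ ^ 3 * (1 - ρ) ^ H * D := by
  have hstate : ‖x t - xtil t‖ ≤ κ ^ 2 * (1 - ρ) ^ H * D := by
    rw [hxtil t ht, sub_sub_cancel]
    exact ContinuousLinearMap.le_of_opNorm_le_of_le _ (hT.norm_pow_le H)
      ((hT.norm_state_le hB hρ hw hM hx1 hu hx (Nat.sub_pos_of_lt ht)).trans hD)
  have haction : u t - util t = -K (x t - xtil t) := by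
    rw [hu t (Nat.one_le_of_lt ht), hutil t ht, map_sub]
    abel
  refine ⟨hstate, ?_⟩
  rw [haction, norm_neg]
  exact (K.le_of_opNorm_le_of_le hK hstate).trans_eq (by ring)

end Operators

/-- Approximation error of the truncated states and actions: in
the state-boundedness setting of the disturbance-action policy, defining for
`t > H` the approximated state `x̃_t = x_t - (A - BK)^H x_{t-H}` and action
`ũ_t = -K x̃_t + Σ_{i=1}^H M_t^{[i]} w_{t-i}`, one has
`‖x_t - x̃_t‖ ≤ κ²(1-ρ)^H D` and `‖u_t - ũ_t‖ ≤ κ³(1-ρ)^H D`. -/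
theorem stmt8 {n m : ℕ} (A : Euc n →L[ℝ] Euc n) (B : Euc m →L[ℝ] Euc n)
    (K : Euc n →L[ℝ] Euc m) (κ ρ κB W a D : ℝ)
    (hstab : IsStronglyStable A B K κ ρ) (hB : ‖B‖ ≤ κB)
    (H : ℕ) (hH : 1 ≤ H) (ha : 0 < a)
    (w : ℤ → Euc n) (hw0 : ∀ s : ℤ, s ≤ 0 → w s = 0) (hwW : ∀ s : ℤ, ‖w s‖ ≤ W)
    (M : ℕ → ℕ → (Euc n →L[ℝ] Euc m))
    (hM : ∀ t : ℕ, ∀ i ∈ Finset.Icc 1 H, ‖M t i‖ ≤ a * (1 - ρ) ^ i)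
    (hcontr : κ ^ 2 * (1 - ρ) ^ H < 1) (hHκ : 1 ≤ (H : ℝ) * κB * κ ^ 2)
    (hD : D = W * (κ ^ 2 + (H : ℝ) * a * κB * κ ^ 2) /
      (ρ * (1 - κ ^ 2 * (1 - ρ) ^ H)))
    (x : ℕ → Euc n) (u : ℕ → Euc m)
    (hx1 : x 1 = 0)
    (hu : ∀ t : ℕ, 1 ≤ t →
      u t = -(K (x t)) + ∑ i ∈ Finset.Icc 1 H, M t i (w ((t : ℤ) - (i : ℤ))))
    (hx : ∀ t : ℕ, 1 ≤ t → x (t + 1) = A (x t) + B (u t) + w (t : ℤ))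
    (xtil : ℕ → Euc n) (util : ℕ → Euc m)
    (hxtil : ∀ t : ℕ, H < t → xtil t = x t - ((A - B ∘L K) ^ H) (x (t - H)))
    (hutil : ∀ t : ℕ, H < t →
      util t = -(K (xtil t)) + ∑ i ∈ Finset.Icc 1 H, M t i (w ((t : ℤ) - (i : ℤ)))) :
    ∀ t : ℕ, H < t →
      ‖x t - xtil t‖ ≤ κ ^ 2 * (1 - ρ) ^ H * D ∧
      ‖u t - util t‖ ≤ κ ^ 3 * (1 - ρ) ^ H * D := by
  obtain ⟨-, hρ, hρ1, hK, hT⟩ := hstab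
  have hr : 0 ≤ 1 - ρ := sub_nonneg.2 hρ1
  have hW : 0 ≤ W := (norm_nonneg _).trans (hwW 0)
  have hκB : 0 ≤ κB := (norm_nonneg _).trans hB
  exact stmt8_general hT hK hB hρ hwW
    (fun t i hi ↦ (hM t i hi).trans <|
      mul_le_of_le_one_right ha.le (pow_le_one₀ hr (sub_le_self 1 hρ.le)))
    (hD ▸ div_le_div_mul_one_sub_s8 (by positivity) hρ (by positivity) hcontr)
    hx1 hu hx hxtil hutil
end

section
/- Consider the COCO-Soft iteration with Q_1 = 0. Suppose there exists M^ε ∈ M with h(M^ε) ≤ 0 and g_t(M^ε) + ε ≤ 0 for all t ∈ {1,…,T}. Then Σ_{t=1}^{T} (f_t(M_t) − f_t(M^ε)) + (η/V) Σ_{t=1}^{T} h⁺(M_{t+1}) ≤ T V L² / (4α) + 2 T ν_max² / V + α D² / V, where ν_max = E₀ + L D + ε. -/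
open scoped RealInnerProductSpace

/-!
A drift-plus-penalty argument. For a comparator `z`, consider the potential
`Φ t = Q t ^ 2 / 2 + α * ‖z - M t‖ ^ 2`. The objective minimized by `M (t + 1)` is `2 * α`-strongly
convex, so its value at `z` exceeds the minimum by at least `α * ‖z - M (t + 1)‖ ^ 2`; this produces
the distance part of `Φ (t + 1) - Φ t`. The cross terms `Q t * ⟪·, v t⟫` cancel against the queue
drift, the comparator's share being nonpositive because `g t z + ε ≤ 0 ≤ Q t`. The only
losses are `V ^ 2 * L ^ 2 / (4 * α)`, from completing the square in the linear term of `f t`, and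
half the square of the queue increment. Summing telescopes `Φ`.
-/

section Convexity

variable {E : Type*} [NormedAddCommGroup E]

lemma add_modulus_le_of_uniformConvexOn_of_isMinOn [NormedSpace ℝ E] {S : Set E} {φ : ℝ → ℝ}
    {F : E → ℝ} {x y : E} (hF : UniformConvexOn S φ F) (hmin : IsMinOn F S x)
    (hx : x ∈ S) (hy : y ∈ S) : F x + φ ‖x - y‖ ≤ F y := by
  have segment_bound : ∀ s ∈ Set.Ioo (0 : ℝ) 1, F x + (1 - s) * φ ‖x - y‖ ≤ F y := by
    rintro s ⟨hs₀, hs₁⟩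
    have hs : 0 ≤ 1 - s := by linarith
    have hle := (hmin (hF.1 hx hy hs hs₀.le (by ring))).trans
      (hF.2 hx hy hs hs₀.le (by ring))
    simp only [smul_eq_mul] at hle
    refine le_of_mul_le_mul_left ?_ hs₀
    linarith
  have hlim : Filter.Tendsto (fun s : ℝ => F x + (1 - s) * φ ‖x - y‖)
      (nhdsWithin 0 (Set.Ioi 0)) (nhds (F x + (1 - 0) * φ ‖x - y‖)) :=
    (Continuous.tendsto (by fun_prop) 0).mono_left nhdsWithin_le_nhds
  simpa using le_of_tendsto hlim
    (Filter.mem_of_superset (Ioo_mem_nhdsGT one_pos) segment_bound)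

variable [InnerProductSpace ℝ E] {S : Set E}

lemma convexOn_inner_sub (hS : Convex ℝ S) (c w : E) : ConvexOn ℝ S fun x => ⟪x - c, w⟫ := by
  have hlin := ((innerₗ E w).convexOn hS).add_const (-⟪c, w⟫)
  refine hlin.congr fun x _ => ?_
  rw [Pi.add_apply, innerₗ_apply_apply, real_inner_comm, inner_sub_left, sub_eq_add_neg]

lemma strongConvexOn_add_mul_sq_norm_sub {φ : E → ℝ} (hφ : ConvexOn ℝ S φ) (c : E) (α : ℝ) :
    StrongConvexOn S (2 * α) fun x => φ x + α * ‖x - c‖ ^ 2 := by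
  rw [strongConvexOn_iff_convex]
  refine ((hφ.add (convexOn_inner_sub hφ.1 c ((-2 * α) • c))).add_const
    (-(α * ‖c‖ ^ 2))).congr fun x _ => ?_
  simp only [Pi.add_apply, norm_sub_sq_real, inner_smul_right, inner_sub_left,
    real_inner_self_eq_norm_sq]
  ring

lemma add_mul_sq_norm_le_of_isMinOn_prox {φ : E → ℝ} {c m z : E} {α : ℝ} (hφ : ConvexOn ℝ S φ)
    (hmin : IsMinOn (fun x => φ x + α * ‖x - c‖ ^ 2) S m) (hm : m ∈ S) (hz : z ∈ S) :
    φ m + α * ‖m - c‖ ^ 2 + α * ‖z - m‖ ^ 2 ≤ φ z + α * ‖z - c‖ ^ 2 := by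
  have hgap := add_modulus_le_of_uniformConvexOn_of_isMinOn
    (strongConvexOn_add_mul_sq_norm_sub hφ c α) hmin hm hz
  simpa [norm_sub_rev m z] using hgap

/-- `u` is a subgradient of `f` at `x` relative to `S`: the affine function with slope `u` through
`(x, f x)` minorizes `f` on `S`. It is all that the regret analysis needs to know about a convex
function and its gradient. -/
def HasSubgradientWithinAt (f : E → ℝ) (u : E) (S : Set E) (x : E) : Prop :=
  ∀ y ∈ S, f x + ⟪y - x, u⟫ ≤ f y

lemma hasSubgradientWithinAt_of_hasGradientAt [CompleteSpace E] {f : E → ℝ} {u x : E}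
    (hf : ConvexOn ℝ S f) (hx : x ∈ S) (hu : HasGradientAt f u x) :
    HasSubgradientWithinAt f u S x := by
  intro y hy
  let line : ℝ →ᵃ[ℝ] E := AffineMap.lineMap x y
  have hline : HasDerivAt line (y - x) 0 := AffineMap.hasDerivAt_lineMap
  have hderiv : HasDerivAt (f ∘ line) ⟪u, y - x⟫ 0 := by
    have hfderiv : HasFDerivAt f (InnerProductSpace.toDual ℝ E u) (line 0) := by
      simpa [line] using hu.hasFDerivAt
    exact hfderiv.comp_hasDerivAt 0 hline
  have hslope := (hf.comp_affineMap line).le_slope_of_hasDerivAt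
    (by simpa [line] using hx) (by simpa [line] using hy) one_pos hderiv
  have hsecant : ⟪u, y - x⟫ ≤ f y - f x := by simpa [slope_def_field, line] using hslope
  rw [real_inner_comm]
  linarith

end Convexity

section Inequalities

variable {E : Type*} [NormedAddCommGroup E] [InnerProductSpace ℝ E]

lemma neg_sq_norm_div_le_inner_add_mul_sq_norm {α : ℝ} (hα : 0 < α) (d w : E) :
    -(‖w‖ ^ 2 / (4 * α)) ≤ ⟪d, w⟫ + α * ‖d‖ ^ 2 := by
  have hsquare : ⟪d, w⟫ + α * ‖d‖ ^ 2 + ‖w‖ ^ 2 / (4 * α) = ‖w + (2 * α) • d‖ ^ 2 / (4 * α) := by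
    rw [norm_add_sq_real, inner_smul_right, norm_smul, mul_pow, Real.norm_eq_abs, sq_abs,
      real_inner_comm]
    field_simp
    ring
  have hnonneg : 0 ≤ ‖w + (2 * α) • d‖ ^ 2 / (4 * α) := by positivity
  linarith

lemma abs_add_inner_add_le {a b D L ε : ℝ} {d v : E} (ha : |a| ≤ b) (hd : ‖d‖ ≤ D)
    (hv : ‖v‖ ≤ L) (hε : 0 ≤ ε) : |a + ⟪d, v⟫ + ε| ≤ b + L * D + ε := by
  have hinner : |⟪d, v⟫| ≤ L * D := calc
    |⟪d, v⟫| ≤ ‖d‖ * ‖v‖ := abs_real_inner_le_norm d v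
    _ ≤ D * L := mul_le_mul hd hv (norm_nonneg v) ((norm_nonneg d).trans hd)
    _ = L * D := mul_comm D L
  calc |a + ⟪d, v⟫ + ε| ≤ |a| + |⟪d, v⟫| + |ε| := abs_add_three _ _ _
    _ ≤ b + L * D + ε := by rw [abs_of_nonneg hε]; gcongr

lemma sq_max_add_zero_le {q w ν : ℝ} (hw : |w| ≤ ν) :
    max (q + w) 0 ^ 2 ≤ q ^ 2 + 2 * (q * w) + ν ^ 2 := by
  have hmax : max (q + w) 0 ^ 2 ≤ (q + w) ^ 2 :=
    sq_le_sq.mpr (by simpa using abs_max_le_max_abs_abs (a := q + w) (b := 0))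
  have hsq : w ^ 2 ≤ ν ^ 2 := sq_le_sq.mpr (hw.trans (le_abs_self ν))
  linarith

lemma sum_Icc_add_le_of_add_le_add {T : ℕ} {a Φ : ℕ → ℝ} {C : ℝ}
    (hstep : ∀ t ∈ Finset.Icc 1 T, a t + Φ (t + 1) ≤ Φ t + C) :
    ∑ t ∈ Finset.Icc 1 T, a t + Φ (T + 1) ≤ Φ 1 + T * C := by
  have hsum : ∑ t ∈ Finset.Icc 1 T, (a t + (Φ (t + 1) - Φ t)) ≤ ∑ _t ∈ Finset.Icc 1 T, C :=
    Finset.sum_le_sum fun t ht => by linarith [hstep t ht]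
  have htelescope : ∑ t ∈ Finset.Icc 1 T, (Φ (t + 1) - Φ t) = Φ (T + 1) - Φ 1 := by
    rw [← Finset.Ico_add_one_right_eq_Icc, Finset.sum_Ico_sub Φ (by omega)]
  rw [Finset.sum_add_distrib, htelescope, Finset.sum_const, Nat.card_Icc, Nat.add_sub_cancel,
    nsmul_eq_mul] at hsum
  linarith

end Inequalities

section CocoSoft

variable {E : Type*} [NormedAddCommGroup E]

/-- The drift-plus-penalty potential relative to the comparator `z`, at the iterate `x` with
queue `q`. -/
noncomputable def cocoPotential (α : ℝ) (z x : E) (q : ℝ) : ℝ :=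
  q ^ 2 / 2 + α * ‖z - x‖ ^ 2

lemma cocoPotential_nonneg {α : ℝ} (hα : 0 ≤ α) (z x : E) (q : ℝ) : 0 ≤ cocoPotential α z x q := by
  unfold cocoPotential
  positivity

variable [InnerProductSpace ℝ E]

/-- The objective of one COCO-Soft step from the point `c` with queue `q`, without its proximal
term: the linearized loss and constraint (slopes `u` and `v`) plus the penalty `η * h⁺`. -/
def cocoSurrogate (V η q : ℝ) (u v c : E) (h : E → ℝ) (x : E) : ℝ :=
  V * ⟪x - c, u⟫ + q * ⟪x - c, v⟫ + η * max (h x) 0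

/-- The COCO-Soft iteration over `S`, started from an empty queue, with slopes `u t` and `v t` in
place of the gradients of the loss and of the constraint `g t` at `M t`. Time starts at `1`;
`M 0` and `Q 0` are unconstrained. -/
structure IsCocoSoft (S : Set E) (g : ℕ → E → ℝ) (u v : ℕ → E) (h : E → ℝ) (V η α ε : ℝ)
    (M : ℕ → E) (Q : ℕ → ℝ) : Prop where
  one_mem : M 1 ∈ S
  succ_mem : ∀ t, 1 ≤ t → M (t + 1) ∈ S
  isMinOn : ∀ t, 1 ≤ t →
    IsMinOn (fun x => cocoSurrogate V η (Q t) (u t) (v t) (M t) h x + α * ‖x - M t‖ ^ 2) S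
      (M (t + 1))
  queue_one : Q 1 = 0
  queue_succ : ∀ t, 1 ≤ t →
    Q (t + 1) = max (Q t + g t (M t) + ⟪M (t + 1) - M t, v t⟫ + ε) 0

lemma convexOn_cocoSurrogate {S : Set E} {h : E → ℝ} {η : ℝ} (hh : ConvexOn ℝ S h) (hη : 0 ≤ η)
    (V q : ℝ) (u v c : E) : ConvexOn ℝ S (cocoSurrogate V η q u v c h) := by
  have hpos : ConvexOn ℝ S fun x => max (h x) 0 := hh.sup (convexOn_const 0 hh.1)
  refine ((convexOn_inner_sub hh.1 c (V • u + q • v)).add (hpos.smul hη)).congr fun x _ => ?_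
  simp only [cocoSurrogate, Pi.add_apply, inner_add_right, inner_smul_right, smul_eq_mul]

namespace IsCocoSoft

variable {S : Set E} {f g : ℕ → E → ℝ} {u v : ℕ → E} {h : E → ℝ} {V η α ε : ℝ} {M : ℕ → E}
  {Q : ℕ → ℝ} {z : E} {L D ν : ℝ} {t T : ℕ}

lemma mem (hM : IsCocoSoft S g u v h V η α ε M Q) (ht : 1 ≤ t) : M t ∈ S :=
  Nat.le_induction hM.one_mem (fun s hs _ => hM.succ_mem s hs) t ht

lemma queue_nonneg (hM : IsCocoSoft S g u v h V η α ε M Q) (ht : 1 ≤ t) : 0 ≤ Q t :=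
  Nat.le_induction hM.queue_one.ge
    (fun s hs _ => (le_max_right _ _).trans_eq (hM.queue_succ s hs).symm) t ht

lemma sq_queue_succ_le (hM : IsCocoSoft S g u v h V η α ε M Q) (ht : 1 ≤ t)
    (hν : |g t (M t) + ⟪M (t + 1) - M t, v t⟫ + ε| ≤ ν) :
    Q (t + 1) ^ 2 ≤ Q t ^ 2 + 2 * (Q t * (g t (M t) + ⟪M (t + 1) - M t, v t⟫ + ε)) + ν ^ 2 := by
  have hbound := sq_max_add_zero_le (q := Q t) hν
  rwa [← add_assoc, ← add_assoc, ← hM.queue_succ t ht] at hbound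

lemma surrogate_succ_add_le (hM : IsCocoSoft S g u v h V η α ε M Q) (hh : ConvexOn ℝ S h)
    (hη : 0 ≤ η) (hz : z ∈ S) (hhz : h z ≤ 0) (ht : 1 ≤ t) :
    cocoSurrogate V η (Q t) (u t) (v t) (M t) h (M (t + 1)) + α * ‖M (t + 1) - M t‖ ^ 2
        + α * ‖z - M (t + 1)‖ ^ 2 ≤
      V * ⟪z - M t, u t⟫ + Q t * ⟪z - M t, v t⟫ + α * ‖z - M t‖ ^ 2 := by
  have hprox := add_mul_sq_norm_le_of_isMinOn_prox
    (convexOn_cocoSurrogate hh hη V (Q t) (u t) (v t) (M t)) (hM.isMinOn t ht)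
    (hM.succ_mem t ht) hz
  have hvalue : cocoSurrogate V η (Q t) (u t) (v t) (M t) h z =
      V * ⟪z - M t, u t⟫ + Q t * ⟪z - M t, v t⟫ := by
    simp only [cocoSurrogate, max_eq_right hhz, mul_zero, add_zero]
  rwa [hvalue] at hprox

lemma regret_add_potential_succ_le (hM : IsCocoSoft S g u v h V η α ε M Q)
    (hh : ConvexOn ℝ S h) (hV : 0 ≤ V) (hη : 0 ≤ η) (hα : 0 < α) (hz : z ∈ S) (hhz : h z ≤ 0)
    (ht : 1 ≤ t) (hf : HasSubgradientWithinAt (f t) (u t) S (M t))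
    (hg : HasSubgradientWithinAt (g t) (v t) S (M t)) (hu : ‖u t‖ ≤ L)
    (hν : |g t (M t) + ⟪M (t + 1) - M t, v t⟫ + ε| ≤ ν) (hgz : g t z + ε ≤ 0) :
    V * (f t (M t) - f t z) + η * max (h (M (t + 1))) 0
        + cocoPotential α z (M (t + 1)) (Q (t + 1)) ≤
      cocoPotential α z (M t) (Q t) + (V ^ 2 * L ^ 2 / (4 * α) + ν ^ 2 / 2) := by
  have hloss : V * (f t (M t) + ⟪z - M t, u t⟫) ≤ V * f t z :=
    mul_le_mul_of_nonneg_left (hf z hz) hV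
  have hconstraint : Q t * (g t (M t) + ⟪z - M t, v t⟫ + ε) ≤ 0 :=
    mul_nonpos_of_nonneg_of_nonpos (hM.queue_nonneg ht) (by linarith [hg z hz])
  have hqueue := hM.sq_queue_succ_le ht hν
  have hprox := hM.surrogate_succ_add_le hh hη hz hhz ht
  have hyoung : -(V ^ 2 * L ^ 2 / (4 * α)) ≤
      V * ⟪M (t + 1) - M t, u t⟫ + α * ‖M (t + 1) - M t‖ ^ 2 := by
    have hsquare := neg_sq_norm_div_le_inner_add_mul_sq_norm hα (M (t + 1) - M t) (V • u t)
    rw [inner_smul_right, norm_smul, mul_pow, Real.norm_eq_abs, sq_abs] at hsquare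
    refine le_trans ?_ hsquare
    gcongr
  unfold cocoSurrogate at hprox
  unfold cocoPotential
  linarith

lemma sum_regret_add_penalty_le (hM : IsCocoSoft S g u v h V η α ε M Q)
    (hh : ConvexOn ℝ S h) (hV : 0 ≤ V) (hη : 0 ≤ η) (hα : 0 < α)
    (hz : z ∈ S) (hhz : h z ≤ 0) (hzD : ‖z - M 1‖ ≤ D)
    (hf : ∀ t ∈ Finset.Icc 1 T, HasSubgradientWithinAt (f t) (u t) S (M t))
    (hg : ∀ t ∈ Finset.Icc 1 T, HasSubgradientWithinAt (g t) (v t) S (M t))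
    (hu : ∀ t ∈ Finset.Icc 1 T, ‖u t‖ ≤ L)
    (hν : ∀ t ∈ Finset.Icc 1 T, |g t (M t) + ⟪M (t + 1) - M t, v t⟫ + ε| ≤ ν)
    (hgz : ∀ t ∈ Finset.Icc 1 T, g t z + ε ≤ 0) :
    V * ∑ t ∈ Finset.Icc 1 T, (f t (M t) - f t z)
        + η * ∑ t ∈ Finset.Icc 1 T, max (h (M (t + 1))) 0 ≤
      α * D ^ 2 + T * (V ^ 2 * L ^ 2 / (4 * α) + ν ^ 2 / 2) := by
  have hsum := sum_Icc_add_le_of_add_le_add (Φ := fun t => cocoPotential α z (M t) (Q t))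
    fun t ht => hM.regret_add_potential_succ_le hh hV hη hα hz hhz (Finset.mem_Icc.mp ht).1
      (hf t ht) (hg t ht) (hu t ht) (hν t ht) (hgz t ht)
  rw [Finset.sum_add_distrib, ← Finset.mul_sum, ← Finset.mul_sum] at hsum
  have hlast := cocoPotential_nonneg hα.le z (M (T + 1)) (Q (T + 1))
  have hfirst : cocoPotential α z (M 1) (Q 1) ≤ α * D ^ 2 := by
    rw [cocoPotential, hM.queue_one, zero_pow two_ne_zero, zero_div, zero_add]
    gcongr
  linarith

end IsCocoSoft

theorem stmt10_general {S : Set E} {D : ℝ} (hD : ∀ x ∈ S, ∀ y ∈ S, ‖x - y‖ ≤ D) {T : ℕ}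
    {f g : ℕ → E → ℝ} {u v : ℕ → E} {h : E → ℝ} {L E₀ V η α ε : ℝ} {M : ℕ → E} {Q : ℕ → ℝ}
    (hM : IsCocoSoft S g u v h V η α ε M Q)
    (hf : ∀ t ∈ Finset.Icc 1 T, HasSubgradientWithinAt (f t) (u t) S (M t))
    (hu : ∀ t ∈ Finset.Icc 1 T, ‖u t‖ ≤ L)
    (hg : ∀ t ∈ Finset.Icc 1 T, HasSubgradientWithinAt (g t) (v t) S (M t))
    (hv : ∀ t ∈ Finset.Icc 1 T, ‖v t‖ ≤ L)
    (hgE : ∀ t ∈ Finset.Icc 1 T, |g t (M t)| ≤ E₀)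
    (hh : ConvexOn ℝ S h) (hV : 0 < V) (hη : 0 ≤ η) (hα : 0 < α) (hε : 0 ≤ ε)
    {z : E} (hz : z ∈ S) (hhz : h z ≤ 0) (hgz : ∀ t ∈ Finset.Icc 1 T, g t z + ε ≤ 0) :
    (∑ t ∈ Finset.Icc 1 T, (f t (M t) - f t z)) +
        (η / V) * ∑ t ∈ Finset.Icc 1 T, max (h (M (t + 1))) 0 ≤
      T * V * L ^ 2 / (4 * α) + T * (E₀ + L * D + ε) ^ 2 / (2 * V) + α * D ^ 2 / V := by
  have hincrement : ∀ t ∈ Finset.Icc 1 T,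
      |g t (M t) + ⟪M (t + 1) - M t, v t⟫ + ε| ≤ E₀ + L * D + ε := fun t ht =>
    have ht₁ := (Finset.mem_Icc.mp ht).1
    abs_add_inner_add_le (hgE t ht) (hD _ (hM.succ_mem t ht₁) _ (hM.mem ht₁)) (hv t ht) hε
  have hsum := hM.sum_regret_add_penalty_le hh hV.le hη hα hz hhz (hD z hz _ hM.one_mem)
    hf hg hu hincrement hgz
  refine le_of_mul_le_mul_left ?_ hV
  calc _ = V * ∑ t ∈ Finset.Icc 1 T, (f t (M t) - f t z)
        + η * ∑ t ∈ Finset.Icc 1 T, max (h (M (t + 1))) 0 := by field_simp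
    _ ≤ α * D ^ 2 + T * (V ^ 2 * L ^ 2 / (4 * α) + (E₀ + L * D + ε) ^ 2 / 2) := hsum
    _ = _ := by field_simp; ring

end CocoSoft

/-- Regret-plus-anytime-penalty bound for the COCO-Soft
iteration: if `Q 1 = 0` and there is `M^ε ∈ 𝓜` with `h(M^ε) ≤ 0` and
`g_t(M^ε) + ε ≤ 0` for all `t ∈ {1,…,T}`, then
`Σ_{t=1}^T (f_t(M_t) − f_t(M^ε)) + (η/V) Σ_{t=1}^T h⁺(M_{t+1})
  ≤ T V L²/(4α) + 2 T ν_max²/V + α D²/V` with `ν_max = E₀ + L D + ε`. -/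
theorem stmt10 {EH : Type*} [NormedAddCommGroup EH] [InnerProductSpace ℝ EH]
    [FiniteDimensional ℝ EH]
    (Mset : Set EH) (hMset : Convex ℝ Mset) (D : ℝ)
    (hD : ∀ x ∈ Mset, ∀ y ∈ Mset, ‖x - y‖ ≤ D)
    (T : ℕ) (f g : ℕ → EH → ℝ) (h : EH → ℝ) (L E₀ : ℝ)
    (hf_conv : ∀ t ∈ Finset.Icc 1 T, ConvexOn ℝ Set.univ (f t))
    (hf_diff : ∀ t ∈ Finset.Icc 1 T, Differentiable ℝ (f t))
    (hf_grad : ∀ t ∈ Finset.Icc 1 T, ∀ x ∈ Mset, ‖gradient (f t) x‖ ≤ L)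
    (hg_conv : ∀ t ∈ Finset.Icc 1 T, ConvexOn ℝ Set.univ (g t))
    (hg_diff : ∀ t ∈ Finset.Icc 1 T, Differentiable ℝ (g t))
    (hg_grad : ∀ t ∈ Finset.Icc 1 T, ∀ x ∈ Mset, ‖gradient (g t) x‖ ≤ L)
    (hg_bdd : ∀ t ∈ Finset.Icc 1 T, ∀ x ∈ Mset, |g t x| ≤ E₀)
    (hh_conv : ConvexOn ℝ Set.univ h)
    (V η α ε : ℝ) (hV : 0 < V) (hη : 0 < η) (hα : 0 < α) (hε : 0 ≤ ε)
    (M : ℕ → EH) (Q : ℕ → ℝ)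
    (hM1 : M 1 ∈ Mset) (hQ1 : Q 1 = 0)
    (hMmem : ∀ t : ℕ, 1 ≤ t → M (t + 1) ∈ Mset)
    (hMmin : ∀ t : ℕ, 1 ≤ t → ∀ y ∈ Mset,
      V * ⟪M (t + 1) - M t, gradient (f t) (M t)⟫ +
          Q t * ⟪M (t + 1) - M t, gradient (g t) (M t)⟫ +
          η * max (h (M (t + 1))) 0 + α * ‖M (t + 1) - M t‖ ^ 2 ≤
        V * ⟪y - M t, gradient (f t) (M t)⟫ +
          Q t * ⟪y - M t, gradient (g t) (M t)⟫ +
          η * max (h y) 0 + α * ‖y - M t‖ ^ 2)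
    (hQrec : ∀ t : ℕ, 1 ≤ t →
      Q (t + 1) =
        max (Q t + g t (M t) + ⟪M (t + 1) - M t, gradient (g t) (M t)⟫ + ε) 0)
    (Meps : EH) (hMeps : Meps ∈ Mset) (hMeps_h : h Meps ≤ 0)
    (hMeps_g : ∀ t ∈ Finset.Icc 1 T, g t Meps + ε ≤ 0) :
    (∑ t ∈ Finset.Icc 1 T, (f t (M t) - f t Meps)) +
        (η / V) * ∑ t ∈ Finset.Icc 1 T, max (h (M (t + 1))) 0 ≤
      (T : ℝ) * V * L ^ 2 / (4 * α) + 2 * (T : ℝ) * (E₀ + L * D + ε) ^ 2 / V +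
        α * D ^ 2 / V := by
  have hM : IsCocoSoft Mset g (fun t => gradient (f t) (M t)) (fun t => gradient (g t) (M t))
      h V η α ε M Q := ⟨hM1, hMmem, hMmin, hQ1, hQrec⟩
  have hmem : ∀ t ∈ Finset.Icc 1 T, M t ∈ Mset := fun t ht => hM.mem (Finset.mem_Icc.mp ht).1
  have hsubgradient : ∀ F : EH → ℝ, ConvexOn ℝ Set.univ F → Differentiable ℝ F → ∀ x ∈ Mset,
      HasSubgradientWithinAt F (gradient F x) Mset x := fun F hF hF' x hx =>
    hasSubgradientWithinAt_of_hasGradientAt (hF.subset (Set.subset_univ _) hMset) hx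
      (hF' x).hasGradientAt
  refine (stmt10_general hD hM
    (fun t ht => hsubgradient _ (hf_conv t ht) (hf_diff t ht) _ (hmem t ht))
    (fun t ht => hf_grad t ht _ (hmem t ht))
    (fun t ht => hsubgradient _ (hg_conv t ht) (hg_diff t ht) _ (hmem t ht))
    (fun t ht => hg_grad t ht _ (hmem t ht)) (fun t ht => hg_bdd t ht _ (hmem t ht))
    (hh_conv.subset (Set.subset_univ _) hMset) hV hη.le hα hε hMeps hMeps_h hMeps_g).trans ?_
  gcongr <;> linarith
end

section
/- Consider the COCO-Soft iteration with Q_1 = 0. Then Σ_{t=1}^{T} g_t(M_t) ≤ Q_{T+1} + L Σ_{t=1}^{T} ‖M_{t+1} − M_t‖ − T ε. -/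
open scoped RealInnerProductSpace

/-!
Truncation at zero can only increase the queue, so
`g_t(M_t) ≤ Q_{t+1} - Q_t - ⟪M_{t+1} - M_t, ∇g_t(M_t)⟫ - ε`. The linear term costs at most
`L * ‖M_{t+1} - M_t‖`, and the queue increments telescope.
-/

section VirtualQueue

open Finset

variable {E : Type*} [SeminormedAddCommGroup E] [NormedSpace ℝ E] {L ε : ℝ}

theorem le_sub_add_mul_norm_sub_of_opNorm_le {ℓ : StrongDual ℝ E} {v : E} {q q' c : ℝ}
    (hℓ : ‖ℓ‖ ≤ L) (hq : q + c + ℓ v + ε ≤ q') :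
    c ≤ q' - q + L * ‖v‖ - ε := by
  have neg_apply_le : -ℓ v ≤ L * ‖v‖ := (neg_le_abs _).trans (ℓ.le_of_opNorm_le hℓ v)
  linarith

theorem stmt11_general {T : ℕ} {x : ℕ → E} {c Q : ℕ → ℝ} {ℓ : ℕ → StrongDual ℝ E}
    (hℓ : ∀ t ∈ Icc 1 T, ‖ℓ t‖ ≤ L)
    (hQ : ∀ t ∈ Icc 1 T, Q t + c t + ℓ t (x (t + 1) - x t) + ε ≤ Q (t + 1)) :
    ∑ t ∈ Icc 1 T, c t ≤
      Q (T + 1) - Q 1 + L * ∑ t ∈ Icc 1 T, ‖x (t + 1) - x t‖ - T * ε := by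
  have telescope : ∑ t ∈ Icc 1 T, (Q (t + 1) - Q t) = Q (T + 1) - Q 1 := by
    rw [← Ico_add_one_right_eq_Icc, sum_Ico_sub Q (Nat.le_add_left 1 T)]
  calc ∑ t ∈ Icc 1 T, c t
      ≤ ∑ t ∈ Icc 1 T, (Q (t + 1) - Q t + L * ‖x (t + 1) - x t‖ - ε) :=
        sum_le_sum fun t ht => le_sub_add_mul_norm_sub_of_opNorm_le (hℓ t ht) (hQ t ht)
    _ = Q (T + 1) - Q 1 + L * ∑ t ∈ Icc 1 T, ‖x (t + 1) - x t‖ - T * ε := by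
        rw [sum_sub_distrib, sum_add_distrib, telescope, mul_sum, sum_const, Nat.card_Icc,
          Nat.add_sub_cancel, nsmul_eq_mul]

end VirtualQueue

/-- Soft-violation decomposition for the COCO-Soft iteration
with `Q 1 = 0`:
`Σ_{t=1}^T g_t(M_t) ≤ Q_{T+1} + L Σ_{t=1}^T ‖M_{t+1} − M_t‖ − T ε`. -/
theorem stmt11 {EH : Type*} [NormedAddCommGroup EH] [InnerProductSpace ℝ EH]
    [FiniteDimensional ℝ EH]
    (Mset : Set EH) (hMset : Convex ℝ Mset) (D : ℝ)
    (hD : ∀ x ∈ Mset, ∀ y ∈ Mset, ‖x - y‖ ≤ D)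
    (T : ℕ) (f g : ℕ → EH → ℝ) (h : EH → ℝ) (L E₀ : ℝ)
    (hf_conv : ∀ t ∈ Finset.Icc 1 T, ConvexOn ℝ Set.univ (f t))
    (hf_diff : ∀ t ∈ Finset.Icc 1 T, Differentiable ℝ (f t))
    (hf_grad : ∀ t ∈ Finset.Icc 1 T, ∀ x ∈ Mset, ‖gradient (f t) x‖ ≤ L)
    (hg_conv : ∀ t ∈ Finset.Icc 1 T, ConvexOn ℝ Set.univ (g t))
    (hg_diff : ∀ t ∈ Finset.Icc 1 T, Differentiable ℝ (g t))
    (hg_grad : ∀ t ∈ Finset.Icc 1 T, ∀ x ∈ Mset, ‖gradient (g t) x‖ ≤ L)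
    (hg_bdd : ∀ t ∈ Finset.Icc 1 T, ∀ x ∈ Mset, |g t x| ≤ E₀)
    (hh_conv : ConvexOn ℝ Set.univ h)
    (V η α ε : ℝ) (hV : 0 < V) (hη : 0 < η) (hα : 0 < α) (hε : 0 ≤ ε)
    (M : ℕ → EH) (Q : ℕ → ℝ)
    (hM1 : M 1 ∈ Mset) (hQ1 : Q 1 = 0)
    (hMmem : ∀ t : ℕ, 1 ≤ t → M (t + 1) ∈ Mset)
    (hMmin : ∀ t : ℕ, 1 ≤ t → ∀ y ∈ Mset,
      V * ⟪M (t + 1) - M t, gradient (f t) (M t)⟫ +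
          Q t * ⟪M (t + 1) - M t, gradient (g t) (M t)⟫ +
          η * max (h (M (t + 1))) 0 + α * ‖M (t + 1) - M t‖ ^ 2 ≤
        V * ⟪y - M t, gradient (f t) (M t)⟫ +
          Q t * ⟪y - M t, gradient (g t) (M t)⟫ +
          η * max (h y) 0 + α * ‖y - M t‖ ^ 2)
    (hQrec : ∀ t : ℕ, 1 ≤ t →
      Q (t + 1) =
        max (Q t + g t (M t) + ⟪M (t + 1) - M t, gradient (g t) (M t)⟫ + ε) 0) :
    ∑ t ∈ Finset.Icc 1 T, g t (M t) ≤
      Q (T + 1) + L * ∑ t ∈ Finset.Icc 1 T, ‖M (t + 1) - M t‖ - (T : ℝ) * ε := by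
  have mem_Mset (t : ℕ) (ht : 1 ≤ t) : M t ∈ Mset :=
    Nat.le_induction hM1 (fun s hs _ => hMmem s hs) t ht
  have norm_le (t : ℕ) (ht : t ∈ Finset.Icc 1 T) : ‖innerSL ℝ (gradient (g t) (M t))‖ ≤ L :=
    (innerSL_apply_norm ℝ _).trans_le (hg_grad t ht _ (mem_Mset t (Finset.mem_Icc.1 ht).1))
  have queue_le (t : ℕ) (ht : t ∈ Finset.Icc 1 T) :
      Q t + g t (M t) + innerSL ℝ (gradient (g t) (M t)) (M (t + 1) - M t) + ε ≤ Q (t + 1) := by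
    rw [innerSL_apply_apply, real_inner_comm, hQrec t (Finset.mem_Icc.1 ht).1]
    exact le_max_left _ _
  simpa only [hQ1, sub_zero] using stmt11_general norm_le queue_le
end

section
/- Consider the COCO-Soft iteration with Q_1 = 0. Suppose there exists M̂ ∈ M with h(M̂) ≤ 0. Then for every t ∈ {1,…,T}, h⁺(M_{t+1}) ≤ ((V + Q_t) L D + α D²) / η. -/
open scoped RealInnerProductSpace

/-!
The next iterate minimizes a model which it shares with every comparator `y`, so its penalty exceeds
that of `y` by at most the gap between the linear parts, controlled by Cauchy–Schwarz, plus the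
proximal term of `y`. Both are bounded as soon as the constraint set lies in a ball around `y`, and
the penalty `h⁺` vanishes at `y = M̂`.
-/

section ProxModel

variable {E : Type*} [SeminormedAddCommGroup E] [InnerProductSpace ℝ E]
  {S : Set E} {ψ : E → ℝ} {u v w x y z : E} {a b α D K L : ℝ}

/-- The objective of a proximal step from `x`, as a function of the candidate `y`: a linear loss
with slope `w`, a penalty `ψ` kept exact, and the proximal term of weight `α`. A COCO-Soft step
minimizes it with `w = V • ∇f + Q • ∇g` and `ψ = η * h⁺`. -/
def proxModel (w : E) (ψ : E → ℝ) (α : ℝ) (x y : E) : ℝ :=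
  ⟪y - x, w⟫ + ψ y + α * ‖y - x‖ ^ 2

theorem proxModel_smul_add_smul (a b : ℝ) (u v : E) (ψ : E → ℝ) (α : ℝ) (x y : E) :
    proxModel (a • u + b • v) ψ α x y =
      a * ⟪y - x, u⟫ + b * ⟪y - x, v⟫ + ψ y + α * ‖y - x‖ ^ 2 := by
  simp only [proxModel, inner_add_right, real_inner_smul_right]

theorem le_add_of_isMinOn_proxModel (hmin : IsMinOn (proxModel w ψ α x) S z) (hy : y ∈ S) :
    ψ z ≤ ψ y + (‖w‖ * ‖y - z‖ + α * (‖y - x‖ ^ 2 - ‖z - x‖ ^ 2)) := by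
  have model_le : ⟪z - x, w⟫ + ψ z + α * ‖z - x‖ ^ 2 ≤ ⟪y - x, w⟫ + ψ y + α * ‖y - x‖ ^ 2 :=
    isMinOn_iff.1 hmin y hy
  have linear_gap : ⟪y - x, w⟫ - ⟪z - x, w⟫ ≤ ‖w‖ * ‖y - z‖ := by
    rw [← inner_sub_left, sub_sub_sub_cancel_right, mul_comm]
    exact real_inner_le_norm _ _
  linarith

theorem le_add_of_isMinOn_proxModel_of_subset_closedBall
    (hmin : IsMinOn (proxModel w ψ α x) S z) (hS : S ⊆ Metric.closedBall y D)
    (hx : x ∈ S) (hy : y ∈ S) (hz : z ∈ S) (hw : ‖w‖ ≤ K) (hα : 0 ≤ α) :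
    ψ z ≤ ψ y + (K * D + α * D ^ 2) := by
  have norm_sub_le : ∀ p ∈ S, ‖y - p‖ ≤ D := fun p hp ↦ mem_closedBall_iff_norm'.1 (hS hp)
  have hK : 0 ≤ K := (norm_nonneg w).trans hw
  calc
    ψ z ≤ ψ y + (‖w‖ * ‖y - z‖ + α * (‖y - x‖ ^ 2 - ‖z - x‖ ^ 2)) :=
      le_add_of_isMinOn_proxModel hmin hy
    _ ≤ ψ y + (‖w‖ * ‖y - z‖ + α * ‖y - x‖ ^ 2) := by
      gcongr
      exact sub_le_self _ (sq_nonneg _)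
    _ ≤ ψ y + (K * D + α * D ^ 2) := by
      gcongr
      exacts [norm_sub_le z hz, norm_sub_le x hx]

theorem norm_smul_add_smul_le_add_mul (ha : 0 ≤ a) (hb : 0 ≤ b) (hu : ‖u‖ ≤ L) (hv : ‖v‖ ≤ L) :
    ‖a • u + b • v‖ ≤ (a + b) * L := by
  calc
    ‖a • u + b • v‖ ≤ a * ‖u‖ + b * ‖v‖ := by
      simpa only [norm_smul_of_nonneg ha, norm_smul_of_nonneg hb] using norm_add_le (a • u) (b • v)
    _ ≤ a * L + b * L := by gcongr
    _ = (a + b) * L := (add_mul a b L).symm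

theorem stmt12_general {T : ℕ} {F G : ℕ → E → E} {φ : E → ℝ} {V η : ℝ} {M : ℕ → E} {Q : ℕ → ℝ}
    (hS : S ⊆ Metric.closedBall y D) (hy : y ∈ S)
    (hF : ∀ t ∈ Finset.Icc 1 T, ∀ x ∈ S, ‖F t x‖ ≤ L)
    (hG : ∀ t ∈ Finset.Icc 1 T, ∀ x ∈ S, ‖G t x‖ ≤ L)
    (hV : 0 ≤ V) (hη : 0 < η) (hα : 0 ≤ α)
    (hM : ∀ t, 1 ≤ t → M t ∈ S) (hQ : ∀ t, 1 ≤ t → 0 ≤ Q t)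
    (hmin : ∀ t, 1 ≤ t → IsMinOn
      (proxModel (V • F t (M t) + Q t • G t (M t)) (fun p ↦ η * φ p) α (M t)) S (M (t + 1))) :
    ∀ t ∈ Finset.Icc 1 T, φ (M (t + 1)) ≤ φ y + ((V + Q t) * L * D + α * D ^ 2) / η := by
  intro t ht
  have one_le : 1 ≤ t := (Finset.mem_Icc.1 ht).1
  have hMt : M t ∈ S := hM t one_le
  have slope_le : ‖V • F t (M t) + Q t • G t (M t)‖ ≤ (V + Q t) * L :=
    norm_smul_add_smul_le_add_mul hV (hQ t one_le) (hF t ht _ hMt) (hG t ht _ hMt)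
  have penalty_le : η * φ (M (t + 1)) ≤ η * φ y + ((V + Q t) * L * D + α * D ^ 2) :=
    le_add_of_isMinOn_proxModel_of_subset_closedBall (ψ := fun p ↦ η * φ p) (hmin t one_le) hS
      hMt hy (hM (t + 1) (Nat.le_add_left 1 t)) slope_le hα
  calc
    φ (M (t + 1)) ≤ (η * φ y + ((V + Q t) * L * D + α * D ^ 2)) / η :=
      (le_div_iff₀' hη).2 penalty_le
    _ = φ y + ((V + Q t) * L * D + α * D ^ 2) / η := by
      rw [add_div, mul_div_cancel_left₀ _ hη.ne']

end ProxModel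

/-- Anytime-violation bound for the COCO-Soft iteration with
`Q 1 = 0`: if some `M̂ ∈ 𝓜` satisfies `h(M̂) ≤ 0`, then for every `t ∈ {1,…,T}`,
`h⁺(M_{t+1}) ≤ ((V + Q_t) L D + α D²)/η`. -/
theorem stmt12 {EH : Type*} [NormedAddCommGroup EH] [InnerProductSpace ℝ EH]
    [FiniteDimensional ℝ EH]
    (Mset : Set EH) (hMset : Convex ℝ Mset) (D : ℝ)
    (hD : ∀ x ∈ Mset, ∀ y ∈ Mset, ‖x - y‖ ≤ D)
    (T : ℕ) (f g : ℕ → EH → ℝ) (h : EH → ℝ) (L E₀ : ℝ)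
    (hf_conv : ∀ t ∈ Finset.Icc 1 T, ConvexOn ℝ Set.univ (f t))
    (hf_diff : ∀ t ∈ Finset.Icc 1 T, Differentiable ℝ (f t))
    (hf_grad : ∀ t ∈ Finset.Icc 1 T, ∀ x ∈ Mset, ‖gradient (f t) x‖ ≤ L)
    (hg_conv : ∀ t ∈ Finset.Icc 1 T, ConvexOn ℝ Set.univ (g t))
    (hg_diff : ∀ t ∈ Finset.Icc 1 T, Differentiable ℝ (g t))
    (hg_grad : ∀ t ∈ Finset.Icc 1 T, ∀ x ∈ Mset, ‖gradient (g t) x‖ ≤ L)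
    (hg_bdd : ∀ t ∈ Finset.Icc 1 T, ∀ x ∈ Mset, |g t x| ≤ E₀)
    (hh_conv : ConvexOn ℝ Set.univ h)
    (V η α ε : ℝ) (hV : 0 < V) (hη : 0 < η) (hα : 0 < α) (hε : 0 ≤ ε)
    (M : ℕ → EH) (Q : ℕ → ℝ)
    (hM1 : M 1 ∈ Mset) (hQ1 : Q 1 = 0)
    (hMmem : ∀ t : ℕ, 1 ≤ t → M (t + 1) ∈ Mset)
    (hMmin : ∀ t : ℕ, 1 ≤ t → ∀ y ∈ Mset,
      V * ⟪M (t + 1) - M t, gradient (f t) (M t)⟫ +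
          Q t * ⟪M (t + 1) - M t, gradient (g t) (M t)⟫ +
          η * max (h (M (t + 1))) 0 + α * ‖M (t + 1) - M t‖ ^ 2 ≤
        V * ⟪y - M t, gradient (f t) (M t)⟫ +
          Q t * ⟪y - M t, gradient (g t) (M t)⟫ +
          η * max (h y) 0 + α * ‖y - M t‖ ^ 2)
    (hQrec : ∀ t : ℕ, 1 ≤ t →
      Q (t + 1) =
        max (Q t + g t (M t) + ⟪M (t + 1) - M t, gradient (g t) (M t)⟫ + ε) 0)
    (Mhat : EH) (hMhat : Mhat ∈ Mset) (hMhat_h : h Mhat ≤ 0) :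
    ∀ t ∈ Finset.Icc 1 T,
      max (h (M (t + 1))) 0 ≤ ((V + Q t) * L * D + α * D ^ 2) / η := by
  have hM : ∀ t, 1 ≤ t → M t ∈ Mset := Nat.le_induction hM1 fun t ht _ ↦ hMmem t ht
  have hQ : ∀ t, 1 ≤ t → 0 ≤ Q t :=
    Nat.le_induction hQ1.ge fun t ht _ ↦ hQrec t ht ▸ le_max_right _ _
  have subset_ball : Mset ⊆ Metric.closedBall Mhat D := fun x hx ↦
    mem_closedBall_iff_norm.2 (hD x hx Mhat hMhat)
  simpa only [max_eq_right hMhat_h, zero_add] using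
    stmt12_general (φ := fun p ↦ max (h p) 0) subset_ball hMhat hf_grad hg_grad hV.le hη hα.le hM hQ
      (by simpa only [isMinOn_iff, proxModel_smul_add_smul] using hMmin)
end

section
/- Consider the COCO-Hard iteration, and suppose there exists M ∈ M with g_t(M) ≤ 0 for every t ∈ {1,…,T} and h(M) ≤ 0. Then Σ_{t=1}^{T} (f_t(M_t) − f_t(M)) ≤ T V L² / (4α) + α D² / V. -/
open scoped RealInnerProductSpace

/-!
The objective defining `M (t + 1)` is strongly convex with modulus `2 * α`, so at the comparator `u`
it exceeds its minimum by at least `α * ‖u - M (t + 1)‖ ^ 2`. The penalty vanishes at `u` and is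
nonnegative at `M (t + 1)`, so it can be dropped; Young's inequality bounds the linear term in the
displacement `M (t + 1) - M t` by `α * ‖M (t + 1) - M t‖ ^ 2` plus a constant. Hence the linearized
regret of one round is at most a constant plus a difference of squared distances to `u`, and these
differences telescope over the rounds.
-/

theorem convexOn_mul_max_zero {E : Type*} [AddCommGroup E] [Module ℝ E] {s : Set E} {f : E → ℝ}
    {c : ℝ} (hf : ConvexOn ℝ s f) (hc : 0 ≤ c) :
    ConvexOn ℝ s fun y ↦ c * max (f y) 0 :=
  (hf.sup (convexOn_const 0 hf.1)).smul hc

section NormedSpace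

variable {E : Type*} [NormedAddCommGroup E] [NormedSpace ℝ E] {s : Set E} {f : E → ℝ} {x y : E}

theorem add_fderivWithin_le_of_convexOn {f' : E →L[ℝ] ℝ} (hf : ConvexOn ℝ s f) (hx : x ∈ s)
    (hy : y ∈ s) (hf' : HasFDerivWithinAt f f' s x) : f x + f' (y - x) ≤ f y := by
  let ℓ : ℝ →ᵃ[ℝ] E := AffineMap.lineMap x y
  have hℓ₀ : ℓ 0 = x := AffineMap.lineMap_apply_zero x y
  have hℓ₁ : ℓ 1 = y := AffineMap.lineMap_apply_one x y
  have hderiv : HasDerivWithinAt (f ∘ ℓ) (f' (y - x)) (ℓ ⁻¹' s) 0 :=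
    (hℓ₀.symm ▸ hf' : HasFDerivWithinAt f f' s (ℓ 0)).comp_hasDerivWithinAt 0
      AffineMap.hasDerivWithinAt_lineMap (Set.mapsTo_preimage ℓ s)
  have hslope : f' (y - x) ≤ slope (f ∘ ℓ) 0 1 :=
    (hf.comp_affineMap ℓ).le_slope_of_hasDerivWithinAt (by simpa [hℓ₀] using hx)
      (by simpa [hℓ₁] using hy) zero_lt_one hderiv
  rw [slope_def_field, Function.comp_apply, Function.comp_apply, hℓ₀, hℓ₁, sub_zero, div_one]
    at hslope
  linarith

theorem add_modulus_le_of_isMinOn_uniformConvexOn {φ : ℝ → ℝ} (hf : UniformConvexOn s φ f)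
    (hx : x ∈ s) (hmin : IsMinOn f s x) (hy : y ∈ s) : f x + φ ‖x - y‖ ≤ f y := by
  have hsegment : ∀ b ∈ Set.Ioo (0 : ℝ) 1, f x + (1 - b) * φ ‖x - y‖ ≤ f y := by
    intro b hb
    have ha : 0 ≤ 1 - b := sub_nonneg.2 hb.2.le
    have hab : 1 - b + b = 1 := sub_add_cancel 1 b
    have hle : f x ≤ (1 - b) * f x + b * f y - (1 - b) * b * φ ‖x - y‖ :=
      (isMinOn_iff.1 hmin _ (hf.1 hx hy ha hb.1.le hab)).trans (hf.2 hx hy ha hb.1.le hab)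
    refine le_of_mul_le_mul_left ?_ hb.1
    linarith
  have hlim : Filter.Tendsto (fun b : ℝ ↦ f x + (1 - b) * φ ‖x - y‖) (nhdsWithin 0 (Set.Ioi 0))
      (nhds (f x + φ ‖x - y‖)) := by
    refine tendsto_nhdsWithin_of_tendsto_nhds (Continuous.tendsto' (by fun_prop) _ _ ?_)
    rw [sub_zero, one_mul]
  exact le_of_tendsto hlim
    (Filter.eventually_of_mem (Ioo_mem_nhdsGT zero_lt_one) hsegment)

end NormedSpace

section InnerProductSpace

variable {E : Type*} [NormedAddCommGroup E] [InnerProductSpace ℝ E] {s : Set E}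

theorem add_inner_gradient_le_of_convexOn [CompleteSpace E] {f : E → ℝ} {x y : E}
    (hf : ConvexOn ℝ s f) (hx : x ∈ s) (hy : y ∈ s) (hd : DifferentiableAt ℝ f x) :
    f x + ⟪y - x, gradient f x⟫ ≤ f y := by
  rw [real_inner_comm]
  exact add_fderivWithin_le_of_convexOn hf hx hy hd.hasGradientAt.hasFDerivAt.hasFDerivWithinAt

theorem convexOn_mul_inner_sub (hs : Convex ℝ s) (a : ℝ) (c v : E) :
    ConvexOn ℝ s fun y ↦ a * ⟪y - c, v⟫ := by
  have hlin : ConvexOn ℝ s fun y ↦ ⟪a • v, y⟫ := (innerₛₗ ℝ (a • v)).convexOn hs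
  refine (hlin.add_const (-⟪a • v, c⟫)).congr fun y _ ↦ ?_
  simp only [Pi.add_apply, real_inner_smul_left, inner_sub_left, real_inner_comm _ v]
  ring

theorem strongConvexOn_mul_norm_sub_sq (hs : Convex ℝ s) (α : ℝ) (c : E) :
    StrongConvexOn s (2 * α) fun y ↦ α * ‖y - c‖ ^ 2 := by
  rw [strongConvexOn_iff_convex]
  refine ((convexOn_mul_inner_sub hs (-2 * α) 0 c).add_const (α * ‖c‖ ^ 2)).congr fun y _ ↦ ?_
  simp only [Pi.add_apply, norm_sub_sq_real, sub_zero]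
  ring

theorem add_mul_norm_sub_sq_le_of_isMinOn {φ : E → ℝ} {α : ℝ} {c x y : E} (hφ : ConvexOn ℝ s φ)
    (hx : x ∈ s) (hmin : IsMinOn (fun z ↦ φ z + α * ‖z - c‖ ^ 2) s x) (hy : y ∈ s) :
    φ x + α * ‖x - c‖ ^ 2 + α * ‖y - x‖ ^ 2 ≤ φ y + α * ‖y - c‖ ^ 2 := by
  have hstrong := hφ.uniformConvexOn_zero.add (strongConvexOn_mul_norm_sub_sq hφ.1 α c)
  simpa [norm_sub_rev y x] using add_modulus_le_of_isMinOn_uniformConvexOn hstrong hx hmin hy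

theorem inner_le_mul_norm_sq_add {α : ℝ} (hα : 0 < α) (x y : E) :
    ⟪x, y⟫ ≤ α * ‖x‖ ^ 2 + ‖y‖ ^ 2 / (4 * α) := by
  have hsq : 0 ≤ ‖(2 * α) • x - y‖ ^ 2 / (4 * α) := by positivity
  have hexpand : ‖(2 * α) • x - y‖ ^ 2 / (4 * α) =
      α * ‖x‖ ^ 2 - ⟪x, y⟫ + ‖y‖ ^ 2 / (4 * α) := by
    rw [norm_sub_sq_real, norm_smul, real_inner_smul_left, mul_pow, Real.norm_eq_abs, sq_abs]
    field_simp
    ring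
  linarith

theorem mul_inner_sub_le_of_isMinOn {P : E → ℝ} {V α : ℝ} {c v x u : E} (hα : 0 < α)
    (hP : ConvexOn ℝ s P) (hx : x ∈ s)
    (hmin : IsMinOn (fun y ↦ V * ⟪y - c, v⟫ + P y + α * ‖y - c‖ ^ 2) s x)
    (hu : u ∈ s) (hPu : P u ≤ P x) :
    V * ⟪c - u, v⟫ ≤ V ^ 2 * ‖v‖ ^ 2 / (4 * α) + α * (‖u - c‖ ^ 2 - ‖u - x‖ ^ 2) := by
  have hprox : V * ⟪x - c, v⟫ + P x + α * ‖x - c‖ ^ 2 + α * ‖u - x‖ ^ 2 ≤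
      V * ⟪u - c, v⟫ + P u + α * ‖u - c‖ ^ 2 :=
    add_mul_norm_sub_sq_le_of_isMinOn ((convexOn_mul_inner_sub hP.1 V c v).add hP) hx hmin hu
  have hyoung : V * ⟪c - x, v⟫ ≤ α * ‖x - c‖ ^ 2 + V ^ 2 * ‖v‖ ^ 2 / (4 * α) := by
    simpa only [real_inner_smul_right, norm_smul, mul_pow, Real.norm_eq_abs, sq_abs,
      norm_sub_rev c x] using inner_le_mul_norm_sq_add hα (c - x) (V • v)
  simp only [inner_sub_left] at hprox hyoung ⊢
  linarith

theorem sum_inner_sub_le_of_isMinOn {P : ℕ → E → ℝ} {V α L : ℝ} {T : ℕ} {x v : ℕ → E} {u : E}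
    (hV : 0 < V) (hα : 0 < α) (hP : ∀ t ∈ Finset.Icc 1 T, ConvexOn ℝ s (P t))
    (hv : ∀ t ∈ Finset.Icc 1 T, ‖v t‖ ≤ L) (hx : ∀ t ∈ Finset.Icc 1 T, x (t + 1) ∈ s)
    (hmin : ∀ t ∈ Finset.Icc 1 T,
      IsMinOn (fun y ↦ V * ⟪y - x t, v t⟫ + P t y + α * ‖y - x t‖ ^ 2) s (x (t + 1)))
    (hu : u ∈ s) (hPu : ∀ t ∈ Finset.Icc 1 T, P t u ≤ P t (x (t + 1))) :
    ∑ t ∈ Finset.Icc 1 T, ⟪x t - u, v t⟫ ≤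
      T * V * L ^ 2 / (4 * α) + α * ‖u - x 1‖ ^ 2 / V := by
  have hround : ∀ t ∈ Finset.Icc 1 T, V * ⟪x t - u, v t⟫ ≤
      V ^ 2 * L ^ 2 / (4 * α) + α * (‖u - x t‖ ^ 2 - ‖u - x (t + 1)‖ ^ 2) := by
    intro t ht
    refine (mul_inner_sub_le_of_isMinOn hα (hP t ht) (hx t ht) (hmin t ht) hu (hPu t ht)).trans ?_
    gcongr
    exact hv t ht
  have htelescope : ∑ t ∈ Finset.Icc 1 T, (‖u - x t‖ ^ 2 - ‖u - x (t + 1)‖ ^ 2) =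
      ‖u - x 1‖ ^ 2 - ‖u - x (T + 1)‖ ^ 2 := by
    rw [← neg_inj, ← Finset.sum_neg_distrib, ← Finset.Ico_add_one_right_eq_Icc]
    simp only [neg_sub]
    exact Finset.sum_Ico_sub (fun t ↦ ‖u - x t‖ ^ 2) T.succ_pos
  refine le_of_mul_le_mul_left ?_ hV
  calc V * ∑ t ∈ Finset.Icc 1 T, ⟪x t - u, v t⟫
      ≤ ∑ t ∈ Finset.Icc 1 T,
          (V ^ 2 * L ^ 2 / (4 * α) + α * (‖u - x t‖ ^ 2 - ‖u - x (t + 1)‖ ^ 2)) := by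
        rw [Finset.mul_sum]
        exact Finset.sum_le_sum hround
    _ = T * (V ^ 2 * L ^ 2 / (4 * α)) + α * (‖u - x 1‖ ^ 2 - ‖u - x (T + 1)‖ ^ 2) := by
        rw [Finset.sum_add_distrib, ← Finset.mul_sum, htelescope, Finset.sum_const,
          Nat.card_Icc, Nat.add_sub_cancel, nsmul_eq_mul]
    _ ≤ T * (V ^ 2 * L ^ 2 / (4 * α)) + α * ‖u - x 1‖ ^ 2 := by
        gcongr
        exact sub_le_self _ (sq_nonneg _)
    _ = V * (T * V * L ^ 2 / (4 * α) + α * ‖u - x 1‖ ^ 2 / V) := by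
        field_simp

theorem stmt15_general {f g : ℕ → E → ℝ} {h : E → ℝ} {v : ℕ → E → E} {V γ η α L D : ℝ} {T : ℕ}
    {M : ℕ → E} {u : E} (hV : 0 < V) (hγ : 0 ≤ γ) (hη : 0 ≤ η) (hα : 0 < α)
    (hv_subgrad : ∀ t ∈ Finset.Icc 1 T, ∀ x ∈ s, ∀ y ∈ s, f t x + ⟪y - x, v t x⟫ ≤ f t y)
    (hv_norm : ∀ t ∈ Finset.Icc 1 T, ∀ x ∈ s, ‖v t x‖ ≤ L)
    (hg : ∀ t ∈ Finset.Icc 1 T, ConvexOn ℝ s (g t)) (hh : ConvexOn ℝ s h)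
    (hM_one : M 1 ∈ s) (hM_succ : ∀ t, 1 ≤ t → M (t + 1) ∈ s)
    (hmin : ∀ t, 1 ≤ t → IsMinOn (fun y ↦ V * ⟪y - M t, v t (M t)⟫ + γ * max (g t y) 0 +
      η * max (h y) 0 + α * ‖y - M t‖ ^ 2) s (M (t + 1)))
    (hu : u ∈ s) (hgu : ∀ t ∈ Finset.Icc 1 T, g t u ≤ 0) (hhu : h u ≤ 0)
    (hD : ‖u - M 1‖ ≤ D) :
    ∑ t ∈ Finset.Icc 1 T, (f t (M t) - f t u) ≤
      T * V * L ^ 2 / (4 * α) + α * D ^ 2 / V := by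
  have hM : ∀ t ∈ Finset.Icc 1 T, M t ∈ s := fun t ht ↦
    Nat.le_induction hM_one (fun k hk _ ↦ hM_succ k hk) t (Finset.mem_Icc.1 ht).1
  let P : ℕ → E → ℝ := fun t y ↦ γ * max (g t y) 0 + η * max (h y) 0
  have hP : ∀ t ∈ Finset.Icc 1 T, ConvexOn ℝ s (P t) := fun t ht ↦
    (convexOn_mul_max_zero (hg t ht) hγ).add (convexOn_mul_max_zero hh hη)
  have hPu : ∀ t ∈ Finset.Icc 1 T, P t u ≤ P t (M (t + 1)) := by
    intro t ht
    simp only [P, max_eq_right (hgu t ht), max_eq_right hhu]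
    gcongr <;> exact le_max_right _ _
  calc ∑ t ∈ Finset.Icc 1 T, (f t (M t) - f t u)
      ≤ ∑ t ∈ Finset.Icc 1 T, ⟪M t - u, v t (M t)⟫ := by
        refine Finset.sum_le_sum fun t ht ↦ ?_
        rw [← neg_sub u, inner_neg_left]
        linarith [hv_subgrad t ht (M t) (hM t ht) u hu]
    _ ≤ T * V * L ^ 2 / (4 * α) + α * ‖u - M 1‖ ^ 2 / V :=
        sum_inner_sub_le_of_isMinOn hV hα hP (fun t ht ↦ hv_norm t ht (M t) (hM t ht))
          (fun t ht ↦ hM_succ t (Finset.mem_Icc.1 ht).1)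
          (fun t ht ↦ by simpa only [P, add_assoc] using hmin t (Finset.mem_Icc.1 ht).1) hu hPu
    _ ≤ T * V * L ^ 2 / (4 * α) + α * D ^ 2 / V := by gcongr

end InnerProductSpace

/-- Regret bound for the COCO-Hard iteration: if `M ∈ 𝓜`
satisfies `g_t(M) ≤ 0` for all `t ∈ {1,…,T}` and `h(M) ≤ 0`, then
`Σ_{t=1}^T (f_t(M_t) − f_t(M)) ≤ T V L²/(4α) + α D²/V`. -/
theorem stmt15 {EH : Type*} [NormedAddCommGroup EH] [InnerProductSpace ℝ EH]
    [FiniteDimensional ℝ EH]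
    (Mset : Set EH) (hMset : Convex ℝ Mset) (D : ℝ)
    (hD : ∀ x ∈ Mset, ∀ y ∈ Mset, ‖x - y‖ ≤ D)
    (T : ℕ) (f g : ℕ → EH → ℝ) (h : EH → ℝ) (L : ℝ)
    (hf_conv : ∀ t ∈ Finset.Icc 1 T, ConvexOn ℝ Set.univ (f t))
    (hf_diff : ∀ t ∈ Finset.Icc 1 T, Differentiable ℝ (f t))
    (hf_grad : ∀ t ∈ Finset.Icc 1 T, ∀ x ∈ Mset, ‖gradient (f t) x‖ ≤ L)
    (hg_conv : ∀ t ∈ Finset.Icc 1 T, ConvexOn ℝ Set.univ (g t))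
    (hh_conv : ConvexOn ℝ Set.univ h)
    (V γ η α : ℝ) (hV : 0 < V) (hγ : 0 < γ) (hη : 0 < η) (hα : 0 < α)
    (M : ℕ → EH)
    (hM1 : M 1 ∈ Mset)
    (hMmem : ∀ t : ℕ, 1 ≤ t → M (t + 1) ∈ Mset)
    (hMmin : ∀ t : ℕ, 1 ≤ t → ∀ y ∈ Mset,
      V * ⟪M (t + 1) - M t, gradient (f t) (M t)⟫ + γ * max (g t (M (t + 1))) 0 +
          η * max (h (M (t + 1))) 0 + α * ‖M (t + 1) - M t‖ ^ 2 ≤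
        V * ⟪y - M t, gradient (f t) (M t)⟫ + γ * max (g t y) 0 +
          η * max (h y) 0 + α * ‖y - M t‖ ^ 2)
    (Mfeas : EH) (hMfeas : Mfeas ∈ Mset)
    (hMfeas_g : ∀ t ∈ Finset.Icc 1 T, g t Mfeas ≤ 0) (hMfeas_h : h Mfeas ≤ 0) :
    ∑ t ∈ Finset.Icc 1 T, (f t (M t) - f t Mfeas) ≤
      (T : ℝ) * V * L ^ 2 / (4 * α) + α * D ^ 2 / V := by
  exact stmt15_general hV hγ.le hη.le hα
    (fun t ht x _ y _ ↦ add_inner_gradient_le_of_convexOn (hf_conv t ht) (Set.mem_univ x)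
      (Set.mem_univ y) (hf_diff t ht x))
    hf_grad (fun t ht ↦ (hg_conv t ht).subset (Set.subset_univ Mset) hMset)
    (hh_conv.subset (Set.subset_univ Mset) hMset) hM1 hMmem hMmin hMfeas hMfeas_g hMfeas_h
    (hD _ hMfeas _ hM1)
end

section
/- Consider the COCO-Hard iteration, and suppose there exists M ∈ M with g_t(M) ≤ 0 for every t ∈ {1,…,T} and h(M) ≤ 0. Then the following three bounds hold: Σ_{t=1}^{T} g_t⁺(M_{t+1}) ≤ (2 T V L D + α D²)/γ, Σ_{t=1}^{T} h⁺(M_{t+1}) ≤ (2 T V L D + α D²)/η, and Σ_{t=1}^{T} ‖M_{t+1} − M_t‖² ≤ (2 T V L D + α D²)/α. -/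
open scoped RealInnerProductSpace

/-!
Each step minimizes a convex function plus `α ‖· - M_t‖²`, so the minimized objective grows
quadratically away from `M_{t+1}`. Compared with the feasible point `M`, this gains
`α ‖M - M_{t+1}‖²`, which makes the proximal terms telescope to at most `α D²`. As the penalties
vanish at `M`, the only other loss per step is `V ⟨M - M_{t+1}, ∇f_t(M_t)⟩ ≤ V L D`, half of
what the claimed bounds allow. The penalties and the squared displacements are nonnegative, so each
of the three sums is bounded separately.
-/

open Filter Topology

theorem add_modulus_le_of_isMinOn {E : Type*} [NormedAddCommGroup E] [NormedSpace ℝ E]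
    {s : Set E} {ω : ℝ → ℝ} {F : E → ℝ} {p y : E} (hF : UniformConvexOn s ω F)
    (hmin : IsMinOn F s p) (hp : p ∈ s) (hy : y ∈ s) : F p + ω ‖y - p‖ ≤ F y := by
  have segment_bound : ∀ l ∈ Set.Ioo (0 : ℝ) 1, F p + (1 - l) * ω ‖y - p‖ ≤ F y := by
    rintro l ⟨hl0, hl1⟩
    have h1l : 0 ≤ 1 - l := by linarith
    have hle := (isMinOn_iff.1 hmin _ (hF.1 hy hp hl0.le h1l (by ring))).trans
      (hF.2 hy hp hl0.le h1l (by ring))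
    simp only [smul_eq_mul] at hle
    refine le_of_mul_le_mul_left ?_ hl0
    linarith
  have hlim : Tendsto (fun l : ℝ => F p + (1 - l) * ω ‖y - p‖) (𝓝[>] 0) (𝓝 (F p + ω ‖y - p‖)) :=
    tendsto_nhdsWithin_of_tendsto_nhds (Continuous.tendsto' (by fun_prop) _ _ (by ring))
  exact le_of_tendsto hlim (eventually_of_mem (Ioo_mem_nhdsGT one_pos) segment_bound)

section InnerProductSpace

variable {E : Type*} [NormedAddCommGroup E] [InnerProductSpace ℝ E] {s : Set E}

theorem convexOn_inner_sub_left (hs : Convex ℝ s) (m q : E) :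
    ConvexOn ℝ s fun z => ⟪z - m, q⟫ := by
  have affine : (fun z => ⟪z - m, q⟫) = fun z => innerₛₗ ℝ q z + -⟪m, q⟫ := by
    funext z
    rw [inner_sub_left, innerₛₗ_apply_apply, real_inner_comm q, sub_eq_add_neg]
  rw [affine]
  exact ((innerₛₗ ℝ q).convexOn hs).add_const _

theorem strongConvexOn_add_mul_sq_dist {φ : E → ℝ} (hφ : ConvexOn ℝ s φ) (α : ℝ) (m : E) :
    StrongConvexOn s (2 * α) fun z => φ z + α * ‖z - m‖ ^ 2 := by
  have expand : (fun z => φ z + α * ‖z - m‖ ^ 2 - 2 * α / 2 * ‖z‖ ^ 2) =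
      fun z => φ z + ⟪z - 0, (-2 * α) • m⟫ + α * ‖m‖ ^ 2 := by
    funext z
    rw [norm_sub_sq_real, sub_zero, real_inner_smul_right]
    ring
  rw [strongConvexOn_iff_convex, expand]
  exact (hφ.add (convexOn_inner_sub_left hφ.1 0 _)).add_const _

theorem prox_three_point {φ : E → ℝ} {α : ℝ} {m p y : E} (hφ : ConvexOn ℝ s φ)
    (hmin : IsMinOn (fun z => φ z + α * ‖z - m‖ ^ 2) s p) (hp : p ∈ s) (hy : y ∈ s) :
    φ p + α * ‖p - m‖ ^ 2 + α * ‖y - p‖ ^ 2 ≤ φ y + α * ‖y - m‖ ^ 2 := by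
  simpa only [mul_div_cancel_left₀ α two_ne_zero] using
    add_modulus_le_of_isMinOn (strongConvexOn_add_mul_sq_dist hφ α m) hmin hp hy

variable {α : ℝ} {x : ℕ → E} {y : E} {m n : ℕ}

theorem sum_prox_add_sum_sq_dist_le {φ : ℕ → E → ℝ} (hα : 0 ≤ α) (hmn : m ≤ n)
    (hφ : ∀ t ∈ Finset.Ico m n, ConvexOn ℝ s (φ t))
    (hx : ∀ t ∈ Finset.Ico m n, x (t + 1) ∈ s)
    (hmin : ∀ t ∈ Finset.Ico m n,
      IsMinOn (fun z => φ t z + α * ‖z - x t‖ ^ 2) s (x (t + 1)))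
    (hy : y ∈ s) :
    ∑ t ∈ Finset.Ico m n, φ t (x (t + 1)) + α * ∑ t ∈ Finset.Ico m n, ‖x (t + 1) - x t‖ ^ 2 ≤
      ∑ t ∈ Finset.Ico m n, φ t y + α * ‖y - x m‖ ^ 2 := by
  have telescope := Finset.sum_Ico_sub (fun t => α * ‖y - x t‖ ^ 2) hmn
  have hsum := Finset.sum_le_sum fun t ht =>
    prox_three_point (hφ t ht) (hmin t ht) (hx t ht) hy
  simp only [Finset.sum_add_distrib, Finset.sum_sub_distrib, ← Finset.mul_sum] at hsum telescope
  have hlast : 0 ≤ α * ‖y - x n‖ ^ 2 := by positivity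
  linarith

theorem sum_penalty_add_sum_sq_dist_le {ψ : ℕ → E → ℝ} {q : ℕ → E} (hα : 0 ≤ α) (hmn : m ≤ n)
    (hψ : ∀ t ∈ Finset.Ico m n, ConvexOn ℝ s (ψ t))
    (hx : ∀ t ∈ Finset.Ico m n, x (t + 1) ∈ s)
    (hmin : ∀ t ∈ Finset.Ico m n,
      IsMinOn (fun z => ⟪z - x t, q t⟫ + ψ t z + α * ‖z - x t‖ ^ 2) s (x (t + 1)))
    (hy : y ∈ s) (hψy : ∀ t ∈ Finset.Ico m n, ψ t y ≤ 0) :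
    ∑ t ∈ Finset.Ico m n, ψ t (x (t + 1)) + α * ∑ t ∈ Finset.Ico m n, ‖x (t + 1) - x t‖ ^ 2 ≤
      ∑ t ∈ Finset.Ico m n, ‖y - x (t + 1)‖ * ‖q t‖ + α * ‖y - x m‖ ^ 2 := by
  have hprox := sum_prox_add_sum_sq_dist_le hα hmn
    (fun t ht => (convexOn_inner_sub_left (hψ t ht).1 (x t) (q t)).add (hψ t ht)) hx hmin hy
  have linear_gap : ∀ t, ⟪y - x t, q t⟫ - ⟪x (t + 1) - x t, q t⟫ ≤ ‖y - x (t + 1)‖ * ‖q t‖ := by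
    intro t
    rw [← inner_sub_left, sub_sub_sub_cancel_right]
    exact real_inner_le_norm _ _
  have hgap := Finset.sum_le_sum fun t (_ : t ∈ Finset.Ico m n) => linear_gap t
  have hψy_sum := Finset.sum_nonpos hψy
  simp only [Pi.add_apply, Finset.sum_add_distrib, Finset.sum_sub_distrib] at hprox hgap
  linarith

theorem convexOn_posPart_penalty {g h : E → ℝ} {γ η : ℝ} (hg : ConvexOn ℝ s g)
    (hh : ConvexOn ℝ s h) (hγ : 0 ≤ γ) (hη : 0 ≤ η) :
    ConvexOn ℝ s fun z => γ * max (g z) 0 + η * max (h z) 0 :=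
  ((hg.sup (convexOn_const 0 hg.1)).smul hγ).add ((hh.sup (convexOn_const 0 hh.1)).smul hη)

theorem sum_violations_add_sum_sq_dist_le {D L V γ η : ℝ} {T : ℕ} {g : ℕ → E → ℝ} {h : E → ℝ}
    {p : ℕ → E} (hV : 0 ≤ V) (hγ : 0 ≤ γ) (hη : 0 ≤ η) (hα : 0 ≤ α)
    (hy : y ∈ s) (hD : ∀ z ∈ s, ‖y - z‖ ≤ D)
    (hp : ∀ t ∈ Finset.Icc 1 T, ‖p t‖ ≤ L)
    (hg : ∀ t ∈ Finset.Icc 1 T, ConvexOn ℝ s (g t)) (hh : ConvexOn ℝ s h)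
    (hx : ∀ t ∈ Finset.Icc 1 (T + 1), x t ∈ s)
    (hmin : ∀ t ∈ Finset.Icc 1 T,
      IsMinOn (fun z => V * ⟪z - x t, p t⟫ + γ * max (g t z) 0 + η * max (h z) 0 +
        α * ‖z - x t‖ ^ 2) s (x (t + 1)))
    (hgy : ∀ t ∈ Finset.Icc 1 T, g t y ≤ 0) (hhy : h y ≤ 0) :
    γ * ∑ t ∈ Finset.Icc 1 T, max (g t (x (t + 1))) 0 +
        η * ∑ t ∈ Finset.Icc 1 T, max (h (x (t + 1))) 0 +
        α * ∑ t ∈ Finset.Icc 1 T, ‖x (t + 1) - x t‖ ^ 2 ≤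
      T * V * L * D + α * D ^ 2 := by
  have hx_succ : ∀ t ∈ Finset.Icc 1 T, x (t + 1) ∈ s := fun t ht =>
    hx _ (by simp only [Finset.mem_Icc] at ht ⊢; omega)
  simp only [← Finset.Ico_add_one_right_eq_Icc 1 T] at hp hg hmin hgy hx_succ ⊢
  have hpen := sum_penalty_add_sum_sq_dist_le (q := fun t => V • p t) hα
    (Nat.le_add_left 1 T) (fun t ht => convexOn_posPart_penalty (hg t ht) hh hγ hη)
    hx_succ (by simpa only [real_inner_smul_right, ← add_assoc] using hmin) hy
    (fun t ht => by simp [hgy t ht, hhy])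
  have hlin : ∑ t ∈ Finset.Ico 1 (T + 1), ‖y - x (t + 1)‖ * ‖V • p t‖ ≤ T * V * L * D := by
    have hterm : ∀ t ∈ Finset.Ico 1 (T + 1), ‖y - x (t + 1)‖ * ‖V • p t‖ ≤ D * (V * L) := by
      intro t ht
      rw [norm_smul, Real.norm_of_nonneg hV]
      gcongr
      · exact (norm_nonneg _).trans (hD y hy)
      · exact hD _ (hx_succ t ht)
      · exact hp t ht
    calc _ ≤ ∑ _t ∈ Finset.Ico 1 (T + 1), D * (V * L) := Finset.sum_le_sum hterm
      _ = T * V * L * D := by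
        rw [Finset.sum_const, Nat.card_Ico, Nat.add_sub_cancel, nsmul_eq_mul]
        ring
  have hfirst : α * ‖y - x 1‖ ^ 2 ≤ α * D ^ 2 := by
    gcongr
    exact hD _ (hx 1 (by simp))
  simp only [Finset.sum_add_distrib, ← Finset.mul_sum] at hpen
  linarith

theorem stmt16_general {D L V γ η : ℝ} {T : ℕ} {g : ℕ → E → ℝ} {h : E → ℝ}
    {p : ℕ → E} (hV : 0 ≤ V) (hγ : 0 < γ) (hη : 0 < η) (hα : 0 < α)
    (hy : y ∈ s) (hD : ∀ z ∈ s, ‖y - z‖ ≤ D)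
    (hp : ∀ t ∈ Finset.Icc 1 T, ‖p t‖ ≤ L)
    (hg : ∀ t ∈ Finset.Icc 1 T, ConvexOn ℝ s (g t)) (hh : ConvexOn ℝ s h)
    (hx : ∀ t ∈ Finset.Icc 1 (T + 1), x t ∈ s)
    (hmin : ∀ t ∈ Finset.Icc 1 T,
      IsMinOn (fun z => V * ⟪z - x t, p t⟫ + γ * max (g t z) 0 + η * max (h z) 0 +
        α * ‖z - x t‖ ^ 2) s (x (t + 1)))
    (hgy : ∀ t ∈ Finset.Icc 1 T, g t y ≤ 0) (hhy : h y ≤ 0) :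
    (∑ t ∈ Finset.Icc 1 T, max (g t (x (t + 1))) 0 ≤ (T * V * L * D + α * D ^ 2) / γ) ∧
      (∑ t ∈ Finset.Icc 1 T, max (h (x (t + 1))) 0 ≤ (T * V * L * D + α * D ^ 2) / η) ∧
      ∑ t ∈ Finset.Icc 1 T, ‖x (t + 1) - x t‖ ^ 2 ≤ (T * V * L * D + α * D ^ 2) / α := by
  have hsum := sum_violations_add_sum_sq_dist_le hV hγ.le hη.le hα.le hy hD hp hg hh hx hmin
    hgy hhy
  have hg_nonneg : 0 ≤ γ * ∑ t ∈ Finset.Icc 1 T, max (g t (x (t + 1))) 0 := by positivity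
  have hh_nonneg : 0 ≤ η * ∑ t ∈ Finset.Icc 1 T, max (h (x (t + 1))) 0 := by positivity
  have hdist_nonneg : 0 ≤ α * ∑ t ∈ Finset.Icc 1 T, ‖x (t + 1) - x t‖ ^ 2 := by positivity
  refine ⟨?_, ?_, ?_⟩
  · rw [le_div_iff₀' hγ]; linarith
  · rw [le_div_iff₀' hη]; linarith
  · rw [le_div_iff₀' hα]; linarith

end InnerProductSpace

/-- Violation and stability bounds for the COCO-Hard
iteration: if some `M ∈ 𝓜` satisfies `g_t(M) ≤ 0` for all `t ∈ {1,…,T}` and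
`h(M) ≤ 0`, then `Σ_{t=1}^T g_t⁺(M_{t+1}) ≤ (2 T V L D + α D²)/γ`,
`Σ_{t=1}^T h⁺(M_{t+1}) ≤ (2 T V L D + α D²)/η`, and
`Σ_{t=1}^T ‖M_{t+1} − M_t‖² ≤ (2 T V L D + α D²)/α`. -/
theorem stmt16 {EH : Type*} [NormedAddCommGroup EH] [InnerProductSpace ℝ EH]
    [FiniteDimensional ℝ EH]
    (Mset : Set EH) (hMset : Convex ℝ Mset) (D : ℝ)
    (hD : ∀ x ∈ Mset, ∀ y ∈ Mset, ‖x - y‖ ≤ D)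
    (T : ℕ) (f g : ℕ → EH → ℝ) (h : EH → ℝ) (L : ℝ)
    (hf_conv : ∀ t ∈ Finset.Icc 1 T, ConvexOn ℝ Set.univ (f t))
    (hf_diff : ∀ t ∈ Finset.Icc 1 T, Differentiable ℝ (f t))
    (hf_grad : ∀ t ∈ Finset.Icc 1 T, ∀ x ∈ Mset, ‖gradient (f t) x‖ ≤ L)
    (hg_conv : ∀ t ∈ Finset.Icc 1 T, ConvexOn ℝ Set.univ (g t))
    (hh_conv : ConvexOn ℝ Set.univ h)
    (V γ η α : ℝ) (hV : 0 < V) (hγ : 0 < γ) (hη : 0 < η) (hα : 0 < α)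
    (M : ℕ → EH)
    (hM1 : M 1 ∈ Mset)
    (hMmem : ∀ t : ℕ, 1 ≤ t → M (t + 1) ∈ Mset)
    (hMmin : ∀ t : ℕ, 1 ≤ t → ∀ y ∈ Mset,
      V * ⟪M (t + 1) - M t, gradient (f t) (M t)⟫ + γ * max (g t (M (t + 1))) 0 +
          η * max (h (M (t + 1))) 0 + α * ‖M (t + 1) - M t‖ ^ 2 ≤
        V * ⟪y - M t, gradient (f t) (M t)⟫ + γ * max (g t y) 0 +
          η * max (h y) 0 + α * ‖y - M t‖ ^ 2)
    (Mfeas : EH) (hMfeas : Mfeas ∈ Mset)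
    (hMfeas_g : ∀ t ∈ Finset.Icc 1 T, g t Mfeas ≤ 0) (hMfeas_h : h Mfeas ≤ 0) :
    (∑ t ∈ Finset.Icc 1 T, max (g t (M (t + 1))) 0 ≤
        (2 * (T : ℝ) * V * L * D + α * D ^ 2) / γ) ∧
      (∑ t ∈ Finset.Icc 1 T, max (h (M (t + 1))) 0 ≤
        (2 * (T : ℝ) * V * L * D + α * D ^ 2) / η) ∧
      ∑ t ∈ Finset.Icc 1 T, ‖M (t + 1) - M t‖ ^ 2 ≤
        (2 * (T : ℝ) * V * L * D + α * D ^ 2) / α := by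
  have hmem : ∀ t, 1 ≤ t → M t ∈ Mset := Nat.le_induction hM1 fun t ht _ => hMmem t ht
  have hgrad : ∀ t ∈ Finset.Icc 1 T, ‖gradient (f t) (M t)‖ ≤ 2 * L := fun t ht => by
    linarith [hf_grad t ht _ (hmem t (Finset.mem_Icc.1 ht).1), norm_nonneg (gradient (f t) (M t))]
  rw [show 2 * (T : ℝ) * V * L * D = T * V * (2 * L) * D by ring]
  exact stmt16_general hV.le hγ hη hα hMfeas (hD _ hMfeas) hgrad
    (fun t ht => (hg_conv t ht).subset (Set.subset_univ _) hMset)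
    (hh_conv.subset (Set.subset_univ _) hMset)
    (fun t ht => hmem t (Finset.mem_Icc.1 ht).1)
    (fun t ht => isMinOn_iff.2 (hMmin t (Finset.mem_Icc.1 ht).1)) hMfeas_g hMfeas_h
end
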